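/- arXiv:1809.03673 — 4 statements merged into one kernel-verified Lean document; each statement's English description precedes it below -/
import Mathlib

section
/- Let u and v be nonnegative integers with u+v = 3, and let α₁ ≤ ⋯ ≤ α_u and β₁ ≤ ⋯ ≤ β_v be positive integers. The ternary mixed sum Φ = α₁P₄(x₁)+⋯+α_uP₄(x_u)+β₁P₈(y₁)+⋯+β_vP₈(y_v) is universal if and only if the coefficient data (α₁,…,α_u; β₁,…,β_v) is one of the following six: (1,1;1), (1,1;2), (1,3;1), (1;1,1), (2,3;1), (2;1,1). In other words, the only ternary universal mixed sums of generalized 4- and 8-gonal numbers are x²+y²+P₈(z), x²+y²+2P₈(z), x²+3y²+P₈(z), x²+P₈(y)+P₈(z), 2x²+3y²+P₈(z), and 2x²+P₈(y)+P₈(z). -/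
/-- The mixed sum with square coefficients `a` and generalized octagonal
coefficients `b` represents the integer `N`. -/
def mixedRepresents (a b : List ℤ) (N : ℤ) : Prop :=
  ∃ x y : List ℤ, x.length = a.length ∧ y.length = b.length ∧
    (List.zipWith (fun c t => c * t ^ 2) a x).sum +
      (List.zipWith (fun c t => c * (3 * t ^ 2 - 2 * t)) b y).sum = N

/-- The mixed sum of generalized 4- and 8-gonal numbers is universal. -/
def mixedUniversal (a b : List ℤ) : Prop :=
  ∀ N : ℤ, 0 ≤ N → mixedRepresents a b N

/-!
Since `3 P₈(t) + 1 = (3t - 1)²`, each of the six sums is universal as soon as one of the forms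
`x² + y² + 3z²`, `x² + 3y² + 3z²`, `x² + y² + 6z²`, `2x² + 3y² + 3z²` represents all positive
integers of a suitable residue class modulo `3`. All four reduce to `x² + y² + 3z²`, and a positive
definite ternary form of discriminant `3` takes only values of `x² + y² + 3z²`, because Hermite
reduction leaves a single such form up to the signs and names of the variables. A form of
discriminant `3` representing a given `k` is built from a prime `p` in an arithmetic progression,
chosen so that quadratic reciprocity makes the required residue modulo `p` a square.

Conversely, representing `0, …, 5` bounds all coefficients by `5`, and representing `0, …, 18`
excludes every remaining triple except the six.
-/

/-! ### Reduction of positive definite ternary quadratic forms -/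

lemma exists_two_mul_abs_add_mul_le (x : ℤ) {m : ℤ} (hm : 0 < m) :
    ∃ q : ℤ, 2 * |x + q * m| ≤ m := by
  refine ⟨-((2 * x + m) / (2 * m)), ?_⟩
  have hdiv := Int.emod_add_mul_ediv (2 * x + m) (2 * m)
  have hnonneg := Int.emod_nonneg (2 * x + m) (show 2 * m ≠ 0 by lia)
  have hlt := Int.emod_lt_of_pos (2 * x + m) (show 0 < 2 * m by lia)
  rcases abs_cases (x + -((2 * x + m) / (2 * m)) * m) with h | h <;> linarith

/-- The integral ternary quadratic form
`a x² + b y² + c z² + r y z + s z x + t x y`. -/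
structure TernaryForm where
  (a b c r s t : ℤ)

namespace TernaryForm

variable {f : TernaryForm}

/-- The value of a ternary form at `(x, y, z)`. -/
def eval (f : TernaryForm) (x y z : ℤ) : ℤ :=
  f.a * x ^ 2 + f.b * y ^ 2 + f.c * z ^ 2 + f.r * y * z + f.s * z * x + f.t * x * y

/-- The set of integers represented by a ternary form. -/
def values (f : TernaryForm) : Set ℤ :=
  {k | ∃ x y z, f.eval x y z = k}

/-- The discriminant of a ternary form, normalised as half the determinant of its Hessian. -/
def disc (f : TernaryForm) : ℤ :=
  4 * f.a * f.b * f.c + f.r * f.s * f.t - f.a * f.r ^ 2 - f.b * f.s ^ 2 - f.c * f.t ^ 2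

/-- The leading `2 × 2` minor of the Hessian of a ternary form. -/
def minor (f : TernaryForm) : ℤ :=
  4 * f.a * f.b - f.t ^ 2

/-- The minor of the Hessian of a ternary form on the rows `x, y` and the columns `x, z`. -/
def crossMinor (f : TernaryForm) : ℤ :=
  2 * f.a * f.r - f.t * f.s

/-- Positive definiteness of a ternary form, expressed by Sylvester's criterion. -/
structure IsPosDef (f : TernaryForm) : Prop where
  a_pos : 0 < f.a
  minor_pos : 0 < f.minor
  disc_pos : 0 < f.disc

/-- The form obtained by exchanging the variables `x` and `y`. -/
def swapXY (f : TernaryForm) : TernaryForm :=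
  ⟨f.b, f.a, f.c, f.s, f.r, f.t⟩

/-- The form obtained by exchanging the variables `y` and `z`. -/
def swapYZ (f : TernaryForm) : TernaryForm :=
  ⟨f.a, f.c, f.b, f.r, f.t, f.s⟩

/-- The form obtained by the unitriangular substitution `x ↦ x + n y + l z`, `y ↦ y + m z`. -/
def shear (f : TernaryForm) (l m n : ℤ) : TernaryForm where
  a := f.a
  b := f.b + f.a * n ^ 2 + f.t * n
  c := f.c + f.a * l ^ 2 + f.b * m ^ 2 + f.r * m + f.s * l + f.t * l * m
  r := f.r + 2 * f.b * m + f.s * n + f.t * l + n * (2 * f.a * l + f.t * m)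
  s := f.s + f.t * m + l * (2 * f.a)
  t := f.t + n * (2 * f.a)

lemma values_swapXY (f : TernaryForm) : f.swapXY.values = f.values := by
  ext k
  constructor <;> rintro ⟨x, y, z, rfl⟩ <;> exact ⟨y, x, z, by simp only [eval, swapXY]; ring⟩

lemma values_swapYZ (f : TernaryForm) : f.swapYZ.values = f.values := by
  ext k
  constructor <;> rintro ⟨x, y, z, rfl⟩ <;> exact ⟨x, z, y, by simp only [eval, swapYZ]; ring⟩

lemma values_shear (f : TernaryForm) (l m n : ℤ) : (f.shear l m n).values = f.values := by
  ext k
  constructor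
  · rintro ⟨x, y, z, rfl⟩
    exact ⟨x + n * y + l * z, y + m * z, z, by simp only [eval, shear]; ring⟩
  · rintro ⟨x, y, z, rfl⟩
    exact ⟨x - n * (y - m * z) - l * z, y - m * z, z, by simp only [eval, shear]; ring⟩

lemma disc_swapXY (f : TernaryForm) : f.swapXY.disc = f.disc := by
  simp only [disc, swapXY]; ring

lemma disc_swapYZ (f : TernaryForm) : f.swapYZ.disc = f.disc := by
  simp only [disc, swapYZ]; ring

lemma disc_shear (f : TernaryForm) (l m n : ℤ) : (f.shear l m n).disc = f.disc := by
  simp only [disc, shear]; ring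

lemma minor_swapXY (f : TernaryForm) : f.swapXY.minor = f.minor := by
  simp only [minor, swapXY]; ring

lemma minor_shear (f : TernaryForm) (l m n : ℤ) : (f.shear l m n).minor = f.minor := by
  simp only [minor, shear]; ring

lemma crossMinor_shear (f : TernaryForm) (l m n : ℤ) :
    (f.shear l m n).crossMinor = f.crossMinor + m * f.minor := by
  simp only [crossMinor, minor, shear]; ring

lemma minor_mul_minor_swapYZ (f : TernaryForm) :
    f.minor * f.swapYZ.minor = f.crossMinor ^ 2 + 4 * f.a * f.disc := by
  simp only [minor, crossMinor, disc, swapYZ]; ring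

namespace IsPosDef

lemma shear (hf : f.IsPosDef) (l m n : ℤ) : (f.shear l m n).IsPosDef where
  a_pos := hf.a_pos
  minor_pos := by rw [minor_shear]; exact hf.minor_pos
  disc_pos := by rw [disc_shear]; exact hf.disc_pos

lemma swapXY (hf : f.IsPosDef) : f.swapXY.IsPosDef where
  a_pos := by
    have hprod : 0 < f.a * f.b := by
      have := hf.minor_pos
      rw [minor] at this
      linarith [sq_nonneg f.t]
    exact pos_of_mul_pos_right hprod hf.a_pos.le
  minor_pos := by rw [minor_swapXY]; exact hf.minor_pos
  disc_pos := by rw [disc_swapXY]; exact hf.disc_pos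

lemma swapYZ (hf : f.IsPosDef) : f.swapYZ.IsPosDef where
  a_pos := hf.a_pos
  minor_pos := by
    have hprod : 0 < f.minor * f.swapYZ.minor := by
      have := hf.a_pos
      have := hf.disc_pos
      rw [minor_mul_minor_swapYZ]
      positivity
    exact pos_of_mul_pos_right hprod hf.minor_pos.le
  disc_pos := by rw [disc_swapYZ]; exact hf.disc_pos

end IsPosDef

/-- A ternary form is size-reduced if no unitriangular substitution makes its off-diagonal
coefficients smaller. -/
structure IsSizeReduced (f : TernaryForm) : Prop where
  abs_t_le : |f.t| ≤ f.a
  abs_s_le : |f.s| ≤ f.a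
  two_mul_abs_crossMinor_le : 2 * |f.crossMinor| ≤ f.minor

/-- A reduced ternary form: positive definite, size-reduced, and such that neither exchange of
adjacent variables decreases the first leading minor of the Hessian that it changes. -/
structure IsReduced (f : TernaryForm) : Prop extends f.IsPosDef, f.IsSizeReduced where
  a_le_b : f.a ≤ f.b
  minor_le_minor_swapYZ : f.minor ≤ f.swapYZ.minor

lemma IsPosDef.exists_isSizeReduced_shear (hf : f.IsPosDef) :
    ∃ l m n, (f.shear l m n).IsSizeReduced := by
  have two_a_pos : 0 < 2 * f.a := by linarith [hf.a_pos]
  obtain ⟨m, hm⟩ := exists_two_mul_abs_add_mul_le f.crossMinor hf.minor_pos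
  obtain ⟨n, hn⟩ := exists_two_mul_abs_add_mul_le f.t two_a_pos
  obtain ⟨l, hl⟩ := exists_two_mul_abs_add_mul_le (f.s + f.t * m) two_a_pos
  exact ⟨l, m, n, le_of_mul_le_mul_left hn two_pos, le_of_mul_le_mul_left hl two_pos,
    by rwa [crossMinor_shear, minor_shear]⟩

theorem IsPosDef.exists_isReduced {f : TernaryForm} (hf : f.IsPosDef) :
    ∃ g : TernaryForm, g.IsReduced ∧ g.disc = f.disc ∧ g.values = f.values := by
  obtain ⟨l, m, n, hsize⟩ := hf.exists_isSizeReduced_shear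
  have hpos := hf.shear l m n
  by_cases hab : (f.shear l m n).b < f.a
  · obtain ⟨g, hg, hdisc, hvalues⟩ := hpos.swapXY.exists_isReduced
    exact ⟨g, hg, by rw [hdisc, disc_swapXY, disc_shear],
      by rw [hvalues, values_swapXY, values_shear]⟩
  by_cases hminor : (f.shear l m n).swapYZ.minor < f.minor
  · obtain ⟨g, hg, hdisc, hvalues⟩ := hpos.swapYZ.exists_isReduced
    exact ⟨g, hg, by rw [hdisc, disc_swapYZ, disc_shear],
      by rw [hvalues, values_swapYZ, values_shear]⟩
  · exact ⟨f.shear l m n, ⟨hpos, hsize, not_lt.1 hab, by rw [minor_shear]; exact not_lt.1 hminor⟩,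
      disc_shear f l m n, values_shear f l m n⟩
termination_by (f.a.toNat, f.minor.toNat)
decreasing_by
  · exact Prod.Lex.left _ _ ((Int.toNat_lt_toNat hf.a_pos).2 hab)
  · exact Prod.Lex.right _ ((Int.toNat_lt_toNat hf.minor_pos).2 hminor)

namespace IsReduced

lemma three_mul_sq_a_le_minor (hf : f.IsReduced) : 3 * f.a ^ 2 ≤ f.minor := by
  have hab : f.a * f.a ≤ f.a * f.b := mul_le_mul_of_nonneg_left hf.a_le_b hf.a_pos.le
  have ht : f.t ^ 2 ≤ f.a ^ 2 := sq_le_sq.2 (hf.abs_t_le.trans (le_abs_self _))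
  rw [minor]
  linarith

lemma three_mul_sq_minor_le (hf : f.IsReduced) : 3 * f.minor ^ 2 ≤ 16 * f.a * f.disc := by
  have hcross : (2 * f.crossMinor) ^ 2 ≤ f.minor ^ 2 := by
    rw [sq_le_sq, abs_mul, abs_two]
    exact hf.two_mul_abs_crossMinor_le.trans (le_abs_self _)
  have hminor := mul_le_mul_of_nonneg_left hf.minor_le_minor_swapYZ hf.minor_pos.le
  rw [minor_mul_minor_swapYZ] at hminor
  linarith

/-- Hermite's bound on the minimum of a positive definite ternary form. -/
lemma cube_a_le (hf : f.IsReduced) : 27 * f.a ^ 3 ≤ 16 * f.disc := by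
  refine le_of_mul_le_mul_left ?_ hf.a_pos
  calc f.a * (27 * f.a ^ 3) = 3 * (3 * f.a ^ 2) ^ 2 := by ring
    _ ≤ 3 * f.minor ^ 2 := by gcongr; exact hf.three_mul_sq_a_le_minor
    _ ≤ f.a * (16 * f.disc) := by linarith [hf.three_mul_sq_minor_le]

lemma a_eq_one (hf : f.IsReduced) (hdisc : f.disc = 3) : f.a = 1 := by
  have hbound := hf.cube_a_le
  have := hf.a_pos
  by_contra hne
  have : 2 ^ 3 ≤ f.a ^ 3 := by gcongr; lia
  lia

lemma minor_le_four (hf : f.IsReduced) (hdisc : f.disc = 3) : f.minor ≤ 4 := by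
  have hbound := hf.three_mul_sq_minor_le
  rw [hf.a_eq_one hdisc, hdisc] at hbound
  exact abs_le_of_sq_le_sq' (by linarith) (by norm_num) |>.2

lemma coeffs_eq_of_disc_eq_three (hf : f.IsReduced) (hdisc : f.disc = 3) :
    (f.a = 1 ∧ f.b = 1 ∧ f.c = 1) ∧
      (f.s = 0 ∧ f.t = 0 ∧ (f.r = 1 ∨ f.r = -1) ∨
        f.r = 0 ∧ f.t = 0 ∧ (f.s = 1 ∨ f.s = -1) ∨
        f.r = 0 ∧ f.s = 0 ∧ (f.t = 1 ∨ f.t = -1)) := by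
  have ha := hf.a_eq_one hdisc
  have hminor_ge := hf.three_mul_sq_a_le_minor
  have hminor_le := hf.minor_le_four hdisc
  have hprod := f.minor_mul_minor_swapYZ
  obtain ⟨ht, hs, hcross⟩ := hf.toIsSizeReduced
  obtain ⟨hcross₁, hcross₂⟩ := abs_le.1 (show |f.crossMinor| ≤ 2 by linarith)
  rw [ha, abs_le] at ht hs
  rw [ha, hdisc] at hprod
  obtain ⟨a, b, c, r, s, t⟩ := f
  simp only [minor, crossMinor, swapYZ] at *
  subst ha
  generalize hA : 4 * 1 * b - t ^ 2 = A at *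
  generalize hB : 2 * 1 * r - t * s = B at *
  obtain ⟨⟨ht₁, ht₂⟩, ⟨hs₁, hs₂⟩⟩ := And.intro ht hs
  interval_cases t <;> interval_cases s <;> interval_cases A <;> interval_cases B <;> omega

end IsReduced

end TernaryForm

lemma exists_sq_add_mul_add_sq_eq (y z : ℤ) {e : ℤ} (he : e = 1 ∨ e = -1) :
    ∃ u v : ℤ, y ^ 2 + e * y * z + z ^ 2 = u ^ 2 + 3 * v ^ 2 := by
  wlog hpos : e = 1 generalizing z e
  · obtain ⟨u, v, huv⟩ := this (-z) (e := -e) (by omega) (by omega)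
    exact ⟨u, v, by linear_combination huv⟩
  subst hpos
  obtain ⟨i, rfl | rfl⟩ := Int.even_or_odd' y
  · exact ⟨z + i, i, by ring⟩
  obtain ⟨j, rfl | rfl⟩ := Int.even_or_odd' z
  · exact ⟨2 * i + 1 + j, j, by ring⟩
  · exact ⟨i - j, i + j + 1, by ring⟩

theorem TernaryForm.IsPosDef.exists_sq_add_sq_add_three_mul_sq_eq {f : TernaryForm}
    (hf : f.IsPosDef) (hdisc : f.disc = 3) {k : ℤ} (hk : k ∈ f.values) :
    ∃ x y z : ℤ, x ^ 2 + y ^ 2 + 3 * z ^ 2 = k := by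
  obtain ⟨g, hg, hgdisc, hvalues⟩ := hf.exists_isReduced
  rw [← hvalues] at hk
  obtain ⟨x, y, z, rfl⟩ := hk
  obtain ⟨⟨ha, hb, hc⟩, ⟨hs, ht, hr⟩ | ⟨hr, ht, hs⟩ | ⟨hr, hs, ht⟩⟩ :=
    hg.coeffs_eq_of_disc_eq_three (hgdisc.trans hdisc)
  · obtain ⟨u, v, huv⟩ := exists_sq_add_mul_add_sq_eq y z hr
    exact ⟨x, u, v, by rw [eval, ha, hb, hc, hs, ht]; linear_combination -huv⟩
  · obtain ⟨u, v, huv⟩ := exists_sq_add_mul_add_sq_eq z x hs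
    exact ⟨y, u, v, by rw [eval, ha, hb, hc, hr, ht]; linear_combination -huv⟩
  · obtain ⟨u, v, huv⟩ := exists_sq_add_mul_add_sq_eq x y ht
    exact ⟨z, u, v, by rw [eval, ha, hb, hc, hr, hs]; linear_combination -huv⟩

/-! ### Integers represented by `x² + y² + 3z²` -/

lemma dvd_add_of_modEq_sub {n a c : ℕ} (hc : c ≤ a) (h : n ≡ a - c [MOD a]) : a ∣ n + c := by
  have hadd := h.add_right c
  rw [Nat.sub_add_cancel hc] at hadd
  exact Nat.modEq_zero_iff_dvd.1 (hadd.trans (Nat.modEq_zero_iff_dvd.2 dvd_rfl))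

section Jacobi

open scoped NumberTheorySymbols

lemma jacobiSym_eq_of_modEq {a m n : ℕ} (hm : Odd m) (h : m ≡ n [MOD 4 * a]) :
    J(a | m) = J(a | n) := by
  have hn : Odd n := by
    have hmod : m ≡ n [MOD 2] := h.of_dvd (Dvd.dvd.mul_right (by norm_num) a)
    exact Nat.odd_iff.2 (Eq.trans hmod.symm (Nat.odd_iff.1 hm))
  rw [jacobiSym.mod_right' a hm, jacobiSym.mod_right' a hn, h]

lemma jacobiSym_four_mul {n : ℕ} (hn : Odd n) (a : ℤ) : J(4 * a | n) = J(a | n) := by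
  rw [jacobiSym.mul_left, jacobiSym.at_four hn, one_mul]

lemma jacobiSym_four_mul_sub {a c : ℕ} (hc : Odd c) (hca : c ≤ 4 * a) :
    J(a | 4 * a - c) = J(c | 4 * a - c) := by
  have hodd : Odd (4 * a - c) := Nat.Even.sub_odd hca ((by decide : Even 4).mul_right a) hc
  rw [← jacobiSym_four_mul hodd]
  apply jacobiSym.mod_left'
  rw [show 4 * (a : ℤ) = c + (4 * a - c : ℕ) by lia, Int.add_emod_right]

lemma jacobiSym_at_neg_one_of_mod_four {n : ℕ} (hn : n % 4 = 1) : J(-1 | n) = 1 := by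
  rw [jacobiSym.at_neg_one (Nat.odd_iff.2 (by lia)), ZMod.χ₄_nat_one_mod_four hn]

lemma jacobiSym_neg_mul_of_four_mul_eq {p : ℕ} (hp : Odd p) {e k q c : ℤ}
    (h : 4 * k * e = p * q + c) : J(-e | p) * J(k | p) = J(-c | p) := by
  rw [← jacobiSym.mul_left, ← jacobiSym_four_mul hp]
  apply jacobiSym.mod_left'
  rw [show 4 * (-e * k) = -c + p * (-q) by linear_combination -h, Int.add_mul_emod_self_left]

/-- The form `p x² + b y² + k z² + r y z + 2 u x y` with `p b = u² + e` takes the value `k` at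
`(0, 0, 1)`, and the relation between `e`, `k`, `p` and `r` says that its discriminant is `3`. -/
lemma exists_sq_add_sq_add_three_mul_sq_eq_of_jacobiSym {p : ℕ} (hp : p.Prime) {e k r : ℤ}
    (he : 0 < e) (h : 4 * k * e = p * r ^ 2 + 3) (hsq : J(-e | p) = 1) :
    ∃ x y z : ℤ, x ^ 2 + y ^ 2 + 3 * z ^ 2 = k := by
  have := Fact.mk hp
  obtain ⟨u, b, hub⟩ : ∃ u b : ℤ, u ^ 2 + e = p * b := by
    obtain ⟨q, hq⟩ := ZMod.isSquare_of_jacobiSym_eq_one hsq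
    obtain ⟨u, rfl⟩ := ZMod.intCast_surjective q
    refine ⟨u, (ZMod.intCast_zmod_eq_zero_iff_dvd _ p).1 ?_⟩
    push_cast at hq ⊢
    linear_combination -hq
  let f : TernaryForm := ⟨p, b, k, r, 0, 2 * u⟩
  have hminor : f.minor = 4 * e := by
    simp only [TernaryForm.minor, f]; linear_combination -4 * hub
  have hdisc : f.disc = 3 := by
    simp only [TernaryForm.disc, f]; linear_combination h - 4 * k * hub
  have hpos : f.IsPosDef := ⟨Int.natCast_pos.2 hp.pos, by lia, by lia⟩
  exact hpos.exists_sq_add_sq_add_three_mul_sq_eq hdisc ⟨0, 0, 1, by simp [TernaryForm.eval, f]⟩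

theorem exists_sq_add_sq_add_three_mul_sq_eq {k : ℤ} (hk : 0 < k) (h3 : ¬ 3 ∣ k) :
    ∃ x y z : ℤ, x ^ 2 + y ^ 2 + 3 * z ^ 2 = k := by
  lift k to ℕ using hk.le
  have hcop_three : (4 * k - 3).Coprime 3 :=
    Nat.Coprime.symm ((Nat.Prime.coprime_iff_not_dvd Nat.prime_three).2 (by lia))
  have hcop : (4 * k - 3).Coprime (4 * (3 * k)) := by
    have hcop_k : (4 * k - 3).Coprime (4 * k) := by
      rwa [← Nat.coprime_self_add_right, Nat.sub_add_cancel (by lia)] at hcop_three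
    rw [mul_left_comm]
    exact hcop_three.mul_right hcop_k
  obtain ⟨p, -, hp, hmod⟩ := Nat.forall_exists_prime_gt_and_modEq 0 (by lia) hcop
  have hmod_k : p ≡ 4 * k - 3 [MOD 4 * k] := hmod.of_dvd ⟨3, by ring⟩
  have hmod_three : p ≡ 4 * k - 3 [MOD 4 * 3] := hmod.of_dvd ⟨k, by ring⟩
  have hp4 : p % 4 = 1 := by have : p % 4 = (4 * k - 3) % 4 := hmod_k.of_mul_right k; lia
  have hodd : Odd p := Nat.odd_iff.2 (by lia)
  obtain ⟨e, he⟩ : 4 * k ∣ p + 3 := dvd_add_of_modEq_sub (by lia) hmod_k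
  have hpe : 4 * (k : ℤ) * e = p * 1 + 3 := by rw [mul_one]; exact_mod_cast he.symm
  have hsymbols : J(-3 | p) = J(k | p) := calc
    J(-3 | p) = J((3 : ℕ) | p) := by
      rw [← one_mul J((3 : ℕ) | p), ← jacobiSym_at_neg_one_of_mod_four hp4, ← jacobiSym.mul_left]
      rfl
    _ = J((3 : ℕ) | 4 * k - 3) := jacobiSym_eq_of_modEq hodd hmod_three
    _ = J(k | 4 * k - 3) := (jacobiSym_four_mul_sub (by decide) (by lia)).symm
    _ = J(k | p) := (jacobiSym_eq_of_modEq hodd hmod_k).symm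
  have hne : J(k | p) ≠ 0 := by
    rw [← hsymbols]
    exact jacobiSym.ne_zero ((Nat.coprime_primes Nat.prime_three hp).2 (by lia))
  have hsq : J(-e | p) = 1 := by
    refine mul_right_cancel₀ hne ?_
    rw [jacobiSym_neg_mul_of_four_mul_eq hodd hpe, hsymbols, one_mul]
  exact exists_sq_add_sq_add_three_mul_sq_eq_of_jacobiSym hp (r := 1) (by lia)
    (by simpa using hpe) hsq

theorem exists_sq_add_sq_add_three_mul_sq_eq_three_mul {m : ℤ} (hm : 0 < m) (h3 : m % 3 = 1) :
    ∃ x y z : ℤ, x ^ 2 + y ^ 2 + 3 * z ^ 2 = 3 * m := by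
  lift m to ℕ using hm.le
  obtain ⟨w, hw⟩ : 3 ∣ 4 * m - 1 := by lia
  have hcop : w.Coprime (4 * m) := by
    rw [show 4 * m = 3 * w + 1 by lia]
    simp
  obtain ⟨p, -, hp, hmod⟩ := Nat.forall_exists_prime_gt_and_modEq 0 (by lia) hcop
  have hmod_three_mul : 3 * p ≡ 4 * m - 1 [MOD 4 * m] := hw ▸ hmod.mul_left 3
  have hp4 : p % 4 = 1 := by have : p % 4 = w % 4 := hmod.of_mul_right m; lia
  have hodd : Odd p := Nat.odd_iff.2 (by lia)
  obtain ⟨e, he⟩ : 4 * m ∣ 3 * p + 1 := dvd_add_of_modEq_sub (by lia) hmod_three_mul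
  have hpe : 4 * (m : ℤ) * e = p * 3 + 1 := by rw [mul_comm (p : ℤ)]; exact_mod_cast he.symm
  have hsymbol_three : J(m | 3) = 1 := by
    rw [jacobiSym.mod_left, show (m : ℤ) % (3 : ℕ) = 1 from h3, jacobiSym.one_left]
  have hsymbol : J(m | p) = 1 := calc
    J(m | p) = J(m | 3 * p) := by
      rw [jacobiSym.mul_right' _ three_ne_zero hp.ne_zero, hsymbol_three, one_mul]
    _ = J(m | 4 * m - 1) := jacobiSym_eq_of_modEq ((by decide : Odd 3).mul hodd) hmod_three_mul
    _ = 1 := by rw [jacobiSym_four_mul_sub odd_one (by lia), Nat.cast_one, jacobiSym.one_left]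
  have hsq : J(-e | p) = 1 := by
    rw [← jacobiSym_at_neg_one_of_mod_four hp4, ← jacobiSym_neg_mul_of_four_mul_eq hodd hpe,
      hsymbol, mul_one]
  exact exists_sq_add_sq_add_three_mul_sq_eq_of_jacobiSym hp (r := 3) (by lia)
    (by linear_combination 3 * hpe) hsq

end Jacobi

/-! ### Passage to the other diagonal forms -/

lemma sq_emod_three_eq_ite (x : ℤ) : x ^ 2 % 3 = if 3 ∣ x then 0 else 1 := by
  have hmod : x % 3 = 0 ∨ x % 3 = 1 ∨ x % 3 = 2 := by lia
  rcases hmod with h | h | h <;> simp [h, pow_two, Int.mul_emod, Int.dvd_iff_emod_eq_zero]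

lemma sq_emod_four_eq_ite (x : ℤ) : x ^ 2 % 4 = if Even x then 0 else 1 := by
  have hmod : x % 4 = 0 ∨ x % 4 = 1 ∨ x % 4 = 2 ∨ x % 4 = 3 := by lia
  split_ifs with hx <;> rcases hmod with h | h | h | h <;>
    first | (simp [h, pow_two, Int.mul_emod]; done) | (rw [Int.even_iff] at hx; lia)

lemma three_dvd_and_three_dvd_of_three_dvd_sq_add_sq {x y : ℤ} (h : 3 ∣ x ^ 2 + y ^ 2) :
    3 ∣ x ∧ 3 ∣ y := by
  have hx := sq_emod_three_eq_ite x
  have hy := sq_emod_three_eq_ite y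
  split_ifs at hx hy <;> lia

theorem exists_sq_add_three_mul_sq_add_sq_eq {k : ℤ} (hk : 0 < k) (h3 : k % 3 = 1) :
    ∃ x y z : ℤ, x ^ 2 + 3 * (y ^ 2 + z ^ 2) = k := by
  obtain ⟨x, y, z, hxyz⟩ := exists_sq_add_sq_add_three_mul_sq_eq_three_mul hk h3
  obtain ⟨⟨i, rfl⟩, ⟨j, rfl⟩⟩ :=
    three_dvd_and_three_dvd_of_three_dvd_sq_add_sq (x := x) (y := y) ⟨k - z ^ 2, by linarith⟩
  exact ⟨z, i, j, by linarith⟩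

lemma even_and_even_add_of_four_dvd {x y z : ℤ} (h : 4 ∣ x ^ 2 + y ^ 2 - z ^ 2 - 2) :
    Even z ∧ Even (x + y) := by
  have hx := sq_emod_four_eq_ite x
  have hy := sq_emod_four_eq_ite y
  have hz := sq_emod_four_eq_ite z
  rw [Int.even_add]
  split_ifs at hx hy hz <;> first | tauto | lia

/-- For even `k = 2m` one doubles a representation of `m`, using
`(x + y)² + (x - y)² = 2 (x² + y²)`; for odd `k` one halves a representation of `2k`. -/
lemma exists_mul_sq_add_sq_add_two_mul_sq_eq {c d k : ℤ} (hc : Odd c) (hcd : 4 ∣ c + d)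
    (hrep : ∀ m, m = 2 * k ∨ 2 * m = k → ∃ x y z : ℤ, c * (x ^ 2 + y ^ 2) + d * z ^ 2 = m) :
    ∃ x y z : ℤ, c * (x ^ 2 + y ^ 2) + 2 * d * z ^ 2 = k := by
  obtain ⟨m, rfl | hm⟩ := Int.even_or_odd' k
  · obtain ⟨x, y, z, hxyz⟩ := hrep m (.inr rfl)
    exact ⟨x + y, x - y, z, by linear_combination 2 * hxyz⟩
  · obtain ⟨x, y, z, hxyz⟩ := hrep (2 * k) (.inl rfl)
    obtain ⟨j, hj⟩ := hc
    obtain ⟨q, hq⟩ := hcd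
    have hdvd : 4 ∣ x ^ 2 + y ^ 2 - z ^ 2 - 2 := by
      have hcop : IsCoprime 4 c := ⟨-j ^ 2 - j, c, by rw [hj]; ring⟩
      refine hcop.dvd_of_dvd_mul_left ⟨m - j - q * z ^ 2, ?_⟩
      linear_combination hxyz - z ^ 2 * hq + 2 * hm - 2 * hj
    obtain ⟨⟨w, rfl⟩, ⟨u, hu⟩⟩ := even_and_even_add_of_four_dvd hdvd
    obtain rfl : x = u + u - y := by lia
    exact ⟨u, u - y, w, by linarith⟩

theorem exists_sq_add_sq_add_six_mul_sq_eq {k : ℤ} (hk : 0 < k) (h3 : ¬ 3 ∣ k) :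
    ∃ x y z : ℤ, x ^ 2 + y ^ 2 + 6 * z ^ 2 = k := by
  have hrep : ∀ m, m = 2 * k ∨ 2 * m = k →
      ∃ x y z : ℤ, 1 * (x ^ 2 + y ^ 2) + 3 * z ^ 2 = m := fun m hm => by
    simpa using exists_sq_add_sq_add_three_mul_sq_eq (k := m) (by lia) (by lia)
  simpa using exists_mul_sq_add_sq_add_two_mul_sq_eq odd_one (by norm_num) hrep

theorem exists_two_mul_sq_add_three_mul_sq_add_sq_eq {k : ℤ} (hk : 0 < k) (h3 : k % 3 = 2) :
    ∃ x y z : ℤ, 2 * x ^ 2 + 3 * (y ^ 2 + z ^ 2) = k := by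
  have hrep : ∀ m, m = 2 * k ∨ 2 * m = k →
      ∃ x y z : ℤ, 3 * (x ^ 2 + y ^ 2) + 1 * z ^ 2 = m := fun m hm => by
    obtain ⟨x, y, z, hxyz⟩ := exists_sq_add_three_mul_sq_add_sq_eq (k := m) (by lia) (by lia)
    exact ⟨y, z, x, by linarith⟩
  obtain ⟨x, y, z, hxyz⟩ := exists_mul_sq_add_sq_add_two_mul_sq_eq (by decide) (by norm_num) hrep
  exact ⟨z, x, y, by linarith⟩

/-! ### The six universal sums -/

/-- The generalized octagonal number `P₈(t)`. -/
def octagonal (t : ℤ) : ℤ :=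
  3 * t ^ 2 - 2 * t

lemma exists_three_mul_octagonal_add_one_eq_sq {w : ℤ} (hw : ¬ 3 ∣ w) :
    ∃ t, 3 * octagonal t + 1 = w ^ 2 := by
  have hmod : w % 3 = 1 ∨ w % 3 = 2 := by lia
  rcases hmod with h | h
  · obtain ⟨j, rfl⟩ : ∃ j, w = 3 * j + 1 := ⟨w / 3, by lia⟩
    exact ⟨-j, by rw [octagonal]; ring⟩
  · obtain ⟨j, rfl⟩ : ∃ j, w = 3 * j - 1 := ⟨(w + 1) / 3, by lia⟩
    exact ⟨j, by rw [octagonal]; ring⟩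

section MixedRepresents

variable {a b c N : ℤ}

lemma exists_of_mixedRepresents_squares (h : mixedRepresents [a, b, c] [] N) :
    ∃ x y z : ℤ, a * x ^ 2 + b * y ^ 2 + c * z ^ 2 = N := by
  obtain ⟨x, y, hx, hy, h⟩ := h
  obtain ⟨x₁, x₂, x₃, rfl⟩ := List.length_eq_three.1 hx
  obtain rfl := List.length_eq_zero_iff.1 hy
  exact ⟨x₁, x₂, x₃, by simpa [add_assoc] using h⟩

lemma exists_of_mixedRepresents_octagonals (h : mixedRepresents [] [a, b, c] N) :
    ∃ x y z : ℤ, a * octagonal x + b * octagonal y + c * octagonal z = N := by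
  obtain ⟨x, y, hx, hy, h⟩ := h
  obtain rfl := List.length_eq_zero_iff.1 hx
  obtain ⟨y₁, y₂, y₃, rfl⟩ := List.length_eq_three.1 hy
  exact ⟨y₁, y₂, y₃, by simpa [octagonal, add_assoc] using h⟩

lemma mixedRepresents_two_one_iff :
    mixedRepresents [a, b] [c] N ↔
      ∃ x y z : ℤ, a * x ^ 2 + b * y ^ 2 + c * octagonal z = N := by
  constructor
  · rintro ⟨x, y, hx, hy, h⟩
    obtain ⟨x₁, x₂, rfl⟩ := List.length_eq_two.1 hx
    obtain ⟨y₁, rfl⟩ := List.length_eq_one_iff.1 hy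
    exact ⟨x₁, x₂, y₁, by simpa [octagonal] using h⟩
  · rintro ⟨x, y, z, h⟩
    exact ⟨[x, y], [z], rfl, rfl, by simpa [octagonal] using h⟩

lemma mixedRepresents_one_two_iff :
    mixedRepresents [a] [b, c] N ↔
      ∃ x y z : ℤ, a * x ^ 2 + b * octagonal y + c * octagonal z = N := by
  constructor
  · rintro ⟨x, y, hx, hy, h⟩
    obtain ⟨x₁, rfl⟩ := List.length_eq_one_iff.1 hx
    obtain ⟨y₁, y₂, rfl⟩ := List.length_eq_two.1 hy
    exact ⟨x₁, y₁, y₂, by simpa [octagonal, add_assoc] using h⟩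
  · rintro ⟨x, y, z, h⟩
    exact ⟨[x], [y, z], rfl, rfl, by simpa [octagonal, add_assoc] using h⟩

lemma mixedRepresents_one_one_of_mul_sq_add_eq (hc : ¬ 3 ∣ c) {w x y : ℤ}
    (hwxy : c * w ^ 2 + 3 * (x ^ 2 + y ^ 2) = 3 * N + c) :
    mixedRepresents [1, 1] [c] N := by
  have hw : ¬ 3 ∣ w := by
    rintro ⟨j, rfl⟩
    exact hc ⟨3 * c * j ^ 2 + x ^ 2 + y ^ 2 - N, by linarith⟩
  obtain ⟨z, hz⟩ := exists_three_mul_octagonal_add_one_eq_sq hw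
  exact mixedRepresents_two_one_iff.2 ⟨x, y, z, by linarith [congrArg (c * ·) hz]⟩

lemma mixedRepresents_three_one_of_sq_add_sq_add_eq {w t x : ℤ}
    (hwtx : w ^ 2 + t ^ 2 + 3 * c * x ^ 2 = 3 * N + 1) :
    mixedRepresents [c, 3] [1] N := by
  wlog ht : 3 ∣ t generalizing w t
  · refine this (w := t) (t := w) (by linarith) ?_
    have hw := sq_emod_three_eq_ite w
    have htsq := sq_emod_three_eq_ite t
    rw [mul_assoc] at hwtx
    split_ifs at hw htsq <;> lia
  have hw : ¬ 3 ∣ w := by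
    rintro ⟨i, rfl⟩
    obtain ⟨j, rfl⟩ := ht
    have hdvd : (3 : ℤ) ∣ 1 := ⟨3 * i ^ 2 + 3 * j ^ 2 + c * x ^ 2 - N, by linarith⟩
    norm_num at hdvd
  obtain ⟨y, rfl⟩ := ht
  obtain ⟨z, hz⟩ := exists_three_mul_octagonal_add_one_eq_sq hw
  exact mixedRepresents_two_one_iff.2 ⟨x, y, z, by linarith⟩

lemma mixedRepresents_octagonals_of_sq_add_sq_add_eq {w t x : ℤ}
    (hwtx : w ^ 2 + t ^ 2 + 3 * c * x ^ 2 = 3 * N + 2) :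
    mixedRepresents [c] [1, 1] N := by
  have hwt : ¬ 3 ∣ w ∧ ¬ 3 ∣ t := by
    have hw := sq_emod_three_eq_ite w
    have ht := sq_emod_three_eq_ite t
    rw [mul_assoc] at hwtx
    split_ifs at hw ht <;> lia
  obtain ⟨y, hy⟩ := exists_three_mul_octagonal_add_one_eq_sq hwt.1
  obtain ⟨z, hz⟩ := exists_three_mul_octagonal_add_one_eq_sq hwt.2
  exact mixedRepresents_one_two_iff.2 ⟨x, y, z, by linarith⟩

end MixedRepresents

lemma mixedUniversal_one_one_one : mixedUniversal [1, 1] [1] := fun N hN => by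
  obtain ⟨w, x, y, h⟩ := exists_sq_add_three_mul_sq_add_sq_eq (k := 3 * N + 1) (by lia) (by lia)
  exact mixedRepresents_one_one_of_mul_sq_add_eq (by norm_num) ((one_mul (w ^ 2)).symm ▸ h)

lemma mixedUniversal_one_one_two : mixedUniversal [1, 1] [2] := fun N hN => by
  obtain ⟨w, x, y, h⟩ :=
    exists_two_mul_sq_add_three_mul_sq_add_sq_eq (k := 3 * N + 2) (by lia) (by lia)
  exact mixedRepresents_one_one_of_mul_sq_add_eq (by norm_num) h

lemma mixedUniversal_one_three_one : mixedUniversal [1, 3] [1] := fun N hN => by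
  obtain ⟨w, t, x, h⟩ := exists_sq_add_sq_add_three_mul_sq_eq (k := 3 * N + 1) (by lia) (by lia)
  exact mixedRepresents_three_one_of_sq_add_sq_add_eq (w := w) (t := t) (x := x) (by linarith)

lemma mixedUniversal_two_three_one : mixedUniversal [2, 3] [1] := fun N hN => by
  obtain ⟨w, t, x, h⟩ := exists_sq_add_sq_add_six_mul_sq_eq (k := 3 * N + 1) (by lia) (by lia)
  exact mixedRepresents_three_one_of_sq_add_sq_add_eq (w := w) (t := t) (x := x) (by linarith)

lemma mixedUniversal_one_octagonals : mixedUniversal [1] [1, 1] := fun N hN => by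
  obtain ⟨w, t, x, h⟩ := exists_sq_add_sq_add_three_mul_sq_eq (k := 3 * N + 2) (by lia) (by lia)
  exact mixedRepresents_octagonals_of_sq_add_sq_add_eq (w := w) (t := t) (x := x) (by linarith)

lemma mixedUniversal_two_octagonals : mixedUniversal [2] [1, 1] := fun N hN => by
  obtain ⟨w, t, x, h⟩ := exists_sq_add_sq_add_six_mul_sq_eq (k := 3 * N + 2) (by lia) (by lia)
  exact mixedRepresents_octagonals_of_sq_add_sq_add_eq (w := w) (t := t) (x := x) (by linarith)

/-! ### Sums representing all small integers -/

/-- The values of `f` are natural numbers, and those that are at most `M` belong to `L`. -/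
def HasSmallValuesIn (f : ℤ → ℤ) (M : ℕ) (L : List ℕ) : Prop :=
  ∀ t, ∃ n : ℕ, f t = n ∧ (n ≤ M → n ∈ L)

lemma hasSmallValuesIn_sq : HasSmallValuesIn (· ^ 2) 18 [0, 1, 4, 9, 16] := fun t => by
  refine ⟨t.natAbs ^ 2, by simp, fun ht => ?_⟩
  have hlt : t.natAbs < 5 := by nlinarith
  interval_cases t.natAbs <;> decide

lemma octagonal_nonneg (t : ℤ) : 0 ≤ octagonal t := by
  unfold octagonal
  rcases le_or_gt t 0 with ht | ht <;> nlinarith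

lemma hasSmallValuesIn_octagonal : HasSmallValuesIn octagonal 18 [0, 1, 5, 8, 16] := fun t => by
  refine ⟨(octagonal t).toNat, (Int.toNat_of_nonneg (octagonal_nonneg t)).symm, fun ht => ?_⟩
  rw [Int.toNat_le] at ht
  unfold octagonal at *
  push_cast at ht
  have hlower : -3 < t := by nlinarith
  have hupper : t < 3 := by nlinarith
  interval_cases t <;> decide

/-- Every `N ≤ M` has the form `a x + b y + c z` with `x ∈ L₁`, `y ∈ L₂`, `z ∈ L₃`. Entries
exceeding `N` are filtered out to keep the decision procedure fast. -/
def RepresentsUpTo (L₁ L₂ L₃ : List ℕ) (M a b c : ℕ) : Prop :=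
  ∀ N ≤ M, ∃ x ∈ L₁.filter (· ≤ N), ∃ y ∈ L₂.filter (· ≤ N), ∃ z ∈ L₃.filter (· ≤ N),
    a * x + b * y + c * z = N

instance (L₁ L₂ L₃ : List ℕ) (M a b c : ℕ) : Decidable (RepresentsUpTo L₁ L₂ L₃ M a b c) := by
  unfold RepresentsUpTo
  infer_instance

/-- A coefficient exceeding `M` can only multiply `0` here. -/
lemma min_add_one_mul_eq {M a x : ℕ} (hax : a * x ≤ M) : min a (M + 1) * x = a * x := by
  rcases le_or_gt a (M + 1) with ha | ha
  · rw [min_eq_left ha]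
  · obtain rfl | hx := x.eq_zero_or_pos
    · simp
    · nlinarith

section Classification

variable {f g h : ℤ → ℤ} {L₁ L₂ L₃ : List ℕ} {a b c : ℕ}

lemma representsUpTo_min_of_forall_exists {B M : ℕ} (hMB : M ≤ B)
    (hf : HasSmallValuesIn f B L₁) (hg : HasSmallValuesIn g B L₂) (hh : HasSmallValuesIn h B L₃)
    (ha : 0 < a) (hb : 0 < b) (hc : 0 < c)
    (hrep : ∀ N : ℤ, 0 ≤ N → ∃ x y z, a * f x + b * g y + c * h z = N) :
    RepresentsUpTo L₁ L₂ L₃ M (min a (M + 1)) (min b (M + 1)) (min c (M + 1)) := by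
  intro N hN
  obtain ⟨x, y, z, hxyz⟩ := hrep N N.cast_nonneg
  obtain ⟨i, hi, hi_mem⟩ := hf x
  obtain ⟨j, hj, hj_mem⟩ := hg y
  obtain ⟨k, hk, hk_mem⟩ := hh z
  rw [hi, hj, hk] at hxyz
  norm_cast at hxyz
  have hai := Nat.le_mul_of_pos_left i ha
  have hbj := Nat.le_mul_of_pos_left j hb
  have hck := Nat.le_mul_of_pos_left k hc
  refine ⟨i, List.mem_filter.2 ⟨hi_mem ?_, decide_eq_true ?_⟩,
    j, List.mem_filter.2 ⟨hj_mem ?_, decide_eq_true ?_⟩,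
    k, List.mem_filter.2 ⟨hk_mem ?_, decide_eq_true ?_⟩, ?_⟩
  on_goal 7 =>
    rwa [min_add_one_mul_eq (by lia), min_add_one_mul_eq (by lia), min_add_one_mul_eq (by lia)]
  all_goals lia

/-- The values up to `m` bound the coefficients by `m`, and those up to `M` then leave finitely
many triples to inspect. -/
lemma mem_of_forall_exists {m M : ℕ} (hmM : m ≤ M) {T : List (ℕ × ℕ × ℕ)}
    (hbound : ∀ a ∈ List.range' 1 (m + 1), ∀ b ∈ List.range' 1 (m + 1),
      ∀ c ∈ List.range' 1 (m + 1), RepresentsUpTo L₁ L₂ L₃ m a b c → a ≤ m ∧ b ≤ m ∧ c ≤ m)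
    (hsmall : ∀ a ∈ List.range' 1 m, ∀ b ∈ List.range' 1 m, ∀ c ∈ List.range' 1 m,
      RepresentsUpTo L₁ L₂ L₃ M a b c → (a, b, c) ∈ T)
    (hf : HasSmallValuesIn f M L₁) (hg : HasSmallValuesIn g M L₂) (hh : HasSmallValuesIn h M L₃)
    (ha : 0 < a) (hb : 0 < b) (hc : 0 < c)
    (hrep : ∀ N : ℤ, 0 ≤ N → ∃ x y z, a * f x + b * g y + c * h z = N) : (a, b, c) ∈ T := by
  simp only [List.mem_range'_1] at hbound hsmall
  have hm_rep := representsUpTo_min_of_forall_exists hmM hf hg hh ha hb hc hrep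
  have hM_rep := representsUpTo_min_of_forall_exists le_rfl hf hg hh ha hb hc hrep
  obtain ⟨ham, hbm, hcm⟩ := hbound _ (by lia) _ (by lia) _ (by lia) hm_rep
  rw [min_eq_left (by lia), min_eq_left (by lia), min_eq_left (by lia)] at hM_rep
  exact hsmall a (by lia) b (by lia) c (by lia) hM_rep

lemma not_mixedUniversal_squares (ha : 0 < a) (hb : 0 < b) (hc : 0 < c) :
    ¬ mixedUniversal [(a : ℤ), b, c] [] := fun huniv =>
  List.not_mem_nil <| mem_of_forall_exists (m := 5) (by norm_num) (by decide +kernel)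
    (by decide +kernel) hasSmallValuesIn_sq hasSmallValuesIn_sq hasSmallValuesIn_sq ha hb hc
    fun N hN => exists_of_mixedRepresents_squares (huniv N hN)

lemma not_mixedUniversal_octagonals (ha : 0 < a) (hb : 0 < b) (hc : 0 < c) :
    ¬ mixedUniversal [] [(a : ℤ), b, c] := fun huniv =>
  List.not_mem_nil <| mem_of_forall_exists (m := 5) (by norm_num) (by decide +kernel)
    (by decide +kernel) hasSmallValuesIn_octagonal hasSmallValuesIn_octagonal
    hasSmallValuesIn_octagonal ha hb hc
    fun N hN => exists_of_mixedRepresents_octagonals (huniv N hN)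

lemma mem_of_mixedUniversal_one_two (ha : 0 < a) (hb : 0 < b) (hc : 0 < c)
    (huniv : mixedUniversal [(a : ℤ)] [(b : ℤ), c]) : (a, b, c) ∈ [(1, 1, 1), (2, 1, 1)] :=
  mem_of_forall_exists (m := 5) (by norm_num) (by decide +kernel) (by decide +kernel)
    hasSmallValuesIn_sq hasSmallValuesIn_octagonal hasSmallValuesIn_octagonal ha hb hc
    fun N hN => mixedRepresents_one_two_iff.1 (huniv N hN)

lemma mem_of_mixedUniversal_two_one (ha : 0 < a) (hb : 0 < b) (hc : 0 < c)
    (huniv : mixedUniversal [(a : ℤ), b] [(c : ℤ)]) :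
    (a, b, c) ∈ [(1, 1, 1), (1, 1, 2), (1, 3, 1), (2, 3, 1), (3, 1, 1), (3, 2, 1)] :=
  mem_of_forall_exists (m := 5) (by norm_num) (by decide +kernel) (by decide +kernel)
    hasSmallValuesIn_sq hasSmallValuesIn_sq hasSmallValuesIn_octagonal ha hb hc
    fun N hN => mixedRepresents_two_one_iff.1 (huniv N hN)

end Classification

lemma eq_of_length_add_length_eq_three {α : Type*} {a b : List α}
    (hlen : a.length + b.length = 3) :
    (∃ x y z, a = [x, y, z] ∧ b = []) ∨ (∃ x y z, a = [x, y] ∧ b = [z]) ∨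
      (∃ x y z, a = [x] ∧ b = [y, z]) ∨ ∃ x y z, a = [] ∧ b = [x, y, z] := by
  rcases a with _ | ⟨x, _ | ⟨y, _ | ⟨z, _ | _⟩⟩⟩ <;>
    rcases b with _ | ⟨x, _ | ⟨y, _ | ⟨z, _ | _⟩⟩⟩ <;>
    simp_all <;> lia

theorem ternary_universal_classification (a b : List ℤ)
    (ha : ∀ c ∈ a, 0 < c) (hb : ∀ c ∈ b, 0 < c)
    (ha' : a.Pairwise (· ≤ ·)) (hb' : b.Pairwise (· ≤ ·))
    (hlen : a.length + b.length = 3) :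
    mixedUniversal a b ↔
      (a, b) ∈ ([([1, 1], [1]), ([1, 1], [2]), ([1, 3], [1]), ([1], [1, 1]),
        ([2, 3], [1]), ([2], [1, 1])] : List (List ℤ × List ℤ)) := by
  constructor
  · intro huniv
    lift a to List ℕ using fun c hc => (ha c hc).le
    lift b to List ℕ using fun c hc => (hb c hc).le
    rw [List.length_map, List.length_map] at hlen
    rcases eq_of_length_add_length_eq_three hlen with
      ⟨x, y, z, rfl, rfl⟩ | ⟨x, y, z, rfl, rfl⟩ | ⟨x, y, z, rfl, rfl⟩ | ⟨x, y, z, rfl, rfl⟩ <;>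
      simp only [List.map_cons, List.map_nil, List.forall_mem_cons, Int.natCast_pos] at ha hb
    · exact (not_mixedUniversal_squares ha.1 ha.2.1 ha.2.2.1 huniv).elim
    · have hmem := mem_of_mixedUniversal_two_one ha.1 ha.2.1 hb.1 huniv
      have hxy : x ≤ y := by simpa using ha'
      grind
    · have hmem := mem_of_mixedUniversal_one_two ha.1 hb.1 hb.2.1 huniv
      grind
    · exact (not_mixedUniversal_octagonals hb.1 hb.2.1 hb.2.2.1 huniv).elim
  · simp only [List.mem_cons, Prod.mk.injEq, List.not_mem_nil, or_false]
    rintro (⟨rfl, rfl⟩ | ⟨rfl, rfl⟩ | ⟨rfl, rfl⟩ | ⟨rfl, rfl⟩ | ⟨rfl, rfl⟩ | ⟨rfl, rfl⟩)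
    exacts [mixedUniversal_one_one_one, mixedUniversal_one_one_two, mixedUniversal_one_three_one,
      mixedUniversal_one_octagonals, mixedUniversal_two_three_one, mixedUniversal_two_octagonals]
end

section
/- Let α₁,…,α_u and β₁,…,β_v be positive integers. The mixed sum Φ = α₁P₄(x₁)+⋯+α_uP₄(x_u)+β₁P₈(y₁)+⋯+β_vP₈(y_v) is universal if and only if for every nonnegative integer N the equation 3α₁x₁²+⋯+3α_ux_u²+β₁y₁²+⋯+β_vy_v² = 3N+β₁+⋯+β_v has an integer solution (x₁,…,x_u,y₁,…,y_v) ∈ ℤ^{u+v} with y₁⋯y_v ≢ 0 (mod 3) (i.e., no y_i is divisible by 3). -/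
/-!
Completing the square gives `3 * P₈(s) + 1 = (3 * s - 1) ^ 2`, and the integers prime to `3` are, up
to sign, exactly the integers `3 * s - 1`. So multiplying a mixed representation of `N` by `3` and
adding the sum of the octagonal coefficients yields a representation by squares, and conversely.
-/

theorem sum_zipWith_const_mul_mul {R ι : Type*} [NonUnitalSemiring R] (k : R) (f : ι → R)
    (a : List R) (x : List ι) :
    (List.zipWith (fun c t => k * c * f t) a x).sum =
      k * (List.zipWith (fun c t => c * f t) a x).sum := by
  simpa only [List.map_zipWith, List.map_id', mul_assoc] using
    List.sum_map_mul_left (List.zipWith (fun c t => c * f t) a x) (fun d => d) k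

theorem sum_zipWith_mul_of_forall₂_eq_mul_add_one {R ι κ : Type*} [CommSemiring R]
    {k : R} {f : ι → R} {g : κ → R} {y : List ι} {z : List κ}
    (hyz : List.Forall₂ (fun t s => f t = k * g s + 1) y z) {b : List R}
    (hb : z.length = b.length) :
    (List.zipWith (fun c t => c * f t) b y).sum =
      k * (List.zipWith (fun c s => c * g s) b z).sum + b.sum := by
  induction hyz generalizing b with
  | nil => simp [List.length_eq_zero_iff.mp hb.symm]
  | cons hts _ ih =>
    obtain _ | ⟨c, b⟩ := b
    · simp at hb
    · simp only [List.zipWith_cons_cons, List.sum_cons, hts, ih (Nat.succ.inj hb)]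
      ring

theorem mul_sub_one_sq {R : Type*} [CommRing R] (k s : R) :
    (k * s - 1) ^ 2 = k * (k * s ^ 2 - 2 * s) + 1 := by
  ring

theorem exists_eq_or_eq_neg_three_mul_sub_one {t : ℤ} (ht : ¬ 3 ∣ t) :
    ∃ s : ℤ, t = 3 * s - 1 ∨ t = -(3 * s - 1) := by
  obtain h | h : t % 3 = 1 ∨ t % 3 = 2 := by omega
  · exact ⟨-(t / 3), by omega⟩
  · exact ⟨t / 3 + 1, by omega⟩

theorem exists_sq_eq_three_mul_octagonal_add_one {t : ℤ} (ht : ¬ 3 ∣ t) :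
    ∃ s : ℤ, t ^ 2 = 3 * (3 * s ^ 2 - 2 * s) + 1 := by
  obtain ⟨s, hs⟩ := exists_eq_or_eq_neg_three_mul_sub_one ht
  exact ⟨s, (sq_eq_sq_iff_eq_or_eq_neg.mpr hs).trans (mul_sub_one_sq 3 s)⟩

theorem exists_forall₂_sq_eq_three_mul_octagonal_add_one {y : List ℤ}
    (hy : ∀ t ∈ y, ¬ (3 : ℤ) ∣ t) :
    ∃ z : List ℤ, List.Forall₂ (fun t s => t ^ 2 = 3 * (3 * s ^ 2 - 2 * s) + 1) y z := by
  choose! g hg using fun t : ℤ => exists_sq_eq_three_mul_octagonal_add_one (t := t)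
  exact ⟨y.map g, List.forall₂_map_right_iff.mpr (List.forall₂_same.mpr fun t ht => hg t (hy t ht))⟩

theorem sum_squares_eq_iff_mixed_sum_eq {a b x y z : List ℤ} {N : ℤ}
    (hyz : List.Forall₂ (fun t s => t ^ 2 = 3 * (3 * s ^ 2 - 2 * s) + 1) y z)
    (hz : z.length = b.length) :
    (List.zipWith (fun c t => 3 * c * t ^ 2) a x).sum +
        (List.zipWith (fun c t => c * t ^ 2) b y).sum = 3 * N + b.sum ↔
      (List.zipWith (fun c t => c * t ^ 2) a x).sum +
        (List.zipWith (fun c t => c * (3 * t ^ 2 - 2 * t)) b z).sum = N := by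
  rw [sum_zipWith_const_mul_mul, sum_zipWith_mul_of_forall₂_eq_mul_add_one hyz hz]
  lia

theorem universal_iff_congruence_representation_general (a b : List ℤ) (N : ℤ) :
    mixedRepresents a b N ↔
      ∃ x y : List ℤ, x.length = a.length ∧ y.length = b.length ∧
        (∀ t ∈ y, ¬ (3 : ℤ) ∣ t) ∧
        (List.zipWith (fun c t => 3 * c * t ^ 2) a x).sum +
          (List.zipWith (fun c t => c * t ^ 2) b y).sum = 3 * N + b.sum := by
  constructor
  · rintro ⟨x, z, hx, hz, hN⟩
    have hyz : List.Forall₂ (fun t s => t ^ 2 = 3 * (3 * s ^ 2 - 2 * s) + 1)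
        (z.map fun s => 3 * s - 1) z :=
      List.forall₂_map_left_iff.mpr (List.forall₂_same.mpr fun s _ => mul_sub_one_sq 3 s)
    have not_dvd : ∀ t ∈ z.map (fun s => 3 * s - 1), ¬ (3 : ℤ) ∣ t :=
      List.forall_mem_map.mpr fun s _ => by omega
    exact ⟨x, _, hx, List.length_map _ |>.trans hz, not_dvd,
      (sum_squares_eq_iff_mixed_sum_eq hyz hz).mpr hN⟩
  · rintro ⟨x, y, hx, hy, not_dvd, hN⟩
    obtain ⟨z, hyz⟩ := exists_forall₂_sq_eq_three_mul_octagonal_add_one not_dvd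
    have hz : z.length = b.length := hyz.length_eq.symm.trans hy
    exact ⟨x, z, hx, hz, (sum_squares_eq_iff_mixed_sum_eq hyz hz).mp hN⟩

theorem universal_iff_congruence_representation (a b : List ℤ)
    (ha : ∀ c ∈ a, 0 < c) (hb : ∀ c ∈ b, 0 < c) :
    mixedUniversal a b ↔
      ∀ N : ℤ, 0 ≤ N →
        ∃ x y : List ℤ, x.length = a.length ∧ y.length = b.length ∧
          (∀ t ∈ y, ¬ (3 : ℤ) ∣ t) ∧
          (List.zipWith (fun c t => 3 * c * t ^ 2) a x).sum +
            (List.zipWith (fun c t => c * t ^ 2) b y).sum = 3 * N + b.sum :=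
  forall₂_congr fun N _ => universal_iff_congruence_representation_general a b N
end

section
/- Let α₁,…,α_u and β₁,…,β_v be positive integers, set B = β₁+⋯+β_v, let E = {n ∈ ℤ : 1 ≤ n < B and n ≡ B (mod 3)}, and for n ∈ E let ν(n) be the positive integer with 4^{ν(n)−1}·n < B ≤ 4^{ν(n)}·n. Assume that for every n ∈ E the equation 3α₁x₁²+⋯+3α_ux_u²+β₁y₁²+⋯+β_vy_v² = 4^{ν(n)}·n has an integer solution with y₁⋯y_v ≢ 0 (mod 3). Then the mixed sum Φ = α₁P₄(x₁)+⋯+α_uP₄(x_u)+β₁P₈(y₁)+⋯+β_vP₈(y_v) is universal if and only if for every nonnegative integer N with 3N+B ≢ 0 (mod 4), the equation 3α₁x₁²+⋯+3α_ux_u²+β₁y₁²+⋯+β_vy_v² = 3N+B has an integer solution with y₁⋯y_v ≢ 0 (mod 3). -/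
/-- Solvability of `3·a₁x₁² + ⋯ + 3·a_u x_u² + b₁y₁² + ⋯ + b_v y_v² = m` with
no `y_j` divisible by `3`. -/
def congRepresents (a b : List ℤ) (m : ℤ) : Prop :=
  ∃ x y : List ℤ, x.length = a.length ∧ y.length = b.length ∧
    (∀ t ∈ y, ¬ (3 : ℤ) ∣ t) ∧
    (List.zipWith (fun c t => 3 * c * t ^ 2) a x).sum +
      (List.zipWith (fun c t => c * t ^ 2) b y).sum = m

/-!
Completing the square gives `3 * (3 * t ^ 2 - 2 * t) + 1 = (3 * t - 1) ^ 2`, and the integers prime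
to `3` are, up to sign, those of the form `3 * t - 1`. Hence, with `B` the sum of the octagonal
coefficients, the mixed sum represents `N` exactly when the quadratic form represents `3 * N + B`
with no `y`-variable divisible by `3`.

The integers represented in this way are stable under multiplication by `4`, which does not change
residues modulo `3`. So if `4 ∣ m` and `B ≤ m`, then `m / 4` either is again at least `B`, and one
descends, or lies in `[B / 4, B)`; there `ν (m / 4) = 1`, and `m` is one of the values assumed to be
represented. The descent can only get stuck at `0`, which is in range only if `B ≤ 0`; for positive
coefficients there are then no octagonal terms, and `0` is represented trivially.
-/

theorem forall_ge_modEq_of_mul_stable {P : ℤ → Prop} {B d q : ℤ} (hq : 1 < q) (hqd : q ≡ 1 [ZMOD d])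
    (mul_stable : ∀ m, P m → P (q * m))
    (zero : B ≤ 0 → 0 ≡ B [ZMOD d] → P 0)
    (base : ∀ n, n < B → B ≤ q * n → n ≡ B [ZMOD d] → P (q * n))
    (not_dvd : ∀ m, B ≤ m → m ≡ B [ZMOD d] → ¬ q ∣ m → P m)
    (m : ℤ) (hm : B ≤ m) (hmd : m ≡ B [ZMOD d]) : P m := by
  induction hk : m.natAbs using Nat.strong_induction_on generalizing m with
  | _ k ih =>
    subst hk
    by_cases hdvd : q ∣ m
    · obtain ⟨n, rfl⟩ := hdvd
      have hnd : n ≡ B [ZMOD d] := by simpa using (hqd.mul_right n).symm.trans hmd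
      rcases eq_or_ne n 0 with rfl | hn
      · simpa using zero (by simpa using hm) hnd
      rcases lt_or_ge n B with hnB | hBn
      · exact base n hnB hm hnd
      · have hlt : n.natAbs < (q * n).natAbs := by
          rw [Int.natAbs_mul]
          exact lt_mul_of_one_lt_left (Int.natAbs_pos.2 hn) (by omega)
        exact mul_stable n (ih _ hlt n hBn hnd rfl)
    · exact not_dvd m hm hmd hdvd

theorem sum_zipWith_const_mul {α β R : Type*} [NonUnitalNonAssocSemiring R] (k : R)
    (f : α → β → R) (l : List α) (l' : List β) :
    (List.zipWith (fun c t => k * f c t) l l').sum = k * (List.zipWith f l l').sum := by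
  rw [← List.map_zipWith (f := (k * ·)), List.sum_map_mul_left, List.map_id']

theorem sum_zipWith_mul_sq_map_mul {α R : Type*} [CommSemiring R] (k : R) (f : α → R)
    (l : List α) (x : List R) :
    (List.zipWith (fun c t => f c * t ^ 2) l (x.map (k * ·))).sum =
      k ^ 2 * (List.zipWith (fun c t => f c * t ^ 2) l x).sum := by
  rw [← sum_zipWith_const_mul, List.zipWith_map_right]
  simp only [mul_pow, mul_left_comm]

theorem sum_zipWith_mul_sq_three_mul_sub_one {R : Type*} [CommRing R] {b y : List R}
    (hy : y.length = b.length) :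
    (List.zipWith (fun c t => c * (3 * t - 1) ^ 2) b y).sum =
      3 * (List.zipWith (fun c t => c * (3 * t ^ 2 - 2 * t)) b y).sum + b.sum := by
  induction b generalizing y with
  | nil => simp
  | cons c b ih =>
    obtain ⟨t, y, rfl⟩ := List.exists_cons_of_length_eq_add_one hy
    simp only [List.zipWith_cons_cons, List.sum_cons, ih (Nat.succ.inj hy)]
    ring

theorem exists_sq_three_mul_sub_one_eq {t : ℤ} (ht : ¬ 3 ∣ t) :
    ∃ s : ℤ, (3 * s - 1) ^ 2 = t ^ 2 := by
  obtain ⟨s, hs | hs⟩ : ∃ s : ℤ, 3 * s - 1 = t ∨ 3 * s - 1 = -t := by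
    rcases (by omega : t % 3 = 1 ∨ t % 3 = 2) with h | h
    · exact ⟨(1 - t) / 3, by omega⟩
    · exact ⟨(t + 1) / 3, by omega⟩
  · exact ⟨s, by rw [hs]⟩
  · exact ⟨s, by rw [hs, neg_sq]⟩

theorem exists_map_sq_three_mul_sub_one_eq {y : List ℤ} (hy : ∀ t ∈ y, ¬ 3 ∣ t) :
    ∃ z : List ℤ, z.length = y.length ∧ z.map (fun s => (3 * s - 1) ^ 2) = y.map (· ^ 2) := by
  choose! root hroot using fun t (ht : ¬ (3 : ℤ) ∣ t) => exists_sq_three_mul_sub_one_eq ht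
  refine ⟨y.map root, List.length_map _, ?_⟩
  rw [List.map_map]
  exact List.map_congr_left fun t ht => hroot t (hy t ht)

section congRepresents

variable {a b : List ℤ}

theorem mixedRepresents_iff_congRepresents {N : ℤ} :
    mixedRepresents a b N ↔ congRepresents a b (3 * N + b.sum) := by
  simp only [mixedRepresents, congRepresents, mul_assoc, sum_zipWith_const_mul]
  constructor
  · rintro ⟨x, y, hx, hy, rfl⟩
    refine ⟨x, y.map (3 * · - 1), hx, by rwa [List.length_map], ?_, ?_⟩
    · simp only [List.mem_map]
      rintro _ ⟨s, -, rfl⟩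
      omega
    · rw [List.zipWith_map_right, sum_zipWith_mul_sq_three_mul_sub_one hy]
      ring
  · rintro ⟨x, y, hx, hy, hy3, hsum⟩
    obtain ⟨z, hz, hzy⟩ := exists_map_sq_three_mul_sub_one_eq hy3
    have hsq : List.zipWith (fun c t => c * t ^ 2) b y =
        List.zipWith (fun c s => c * (3 * s - 1) ^ 2) b z := by
      simpa only [List.zipWith_map_right] using congrArg (List.zipWith (· * ·) b) hzy.symm
    refine ⟨x, z, hx, hz.trans hy, ?_⟩
    rw [hsq, sum_zipWith_mul_sq_three_mul_sub_one (hz.trans hy)] at hsum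
    linarith

theorem congRepresents.sq_mul {m k : ℤ} (hm : congRepresents a b m) (hk : ¬ 3 ∣ k) :
    congRepresents a b (k ^ 2 * m) := by
  obtain ⟨x, y, hx, hy, hy3, rfl⟩ := hm
  refine ⟨x.map (k * ·), y.map (k * ·), by rwa [List.length_map], by rwa [List.length_map], ?_, ?_⟩
  · simp only [List.mem_map]
    rintro _ ⟨t, ht, rfl⟩
    exact Int.prime_three.not_dvd_mul hk (hy3 t ht)
  · rw [sum_zipWith_mul_sq_map_mul k (3 * ·), sum_zipWith_mul_sq_map_mul k (fun c => c), mul_add]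

theorem congRepresents_nil_zero : congRepresents a [] 0 :=
  ⟨a.map (0 * ·), [], List.length_map _, rfl, by simp, by
    rw [sum_zipWith_mul_sq_map_mul 0 (3 * ·)]; simp⟩

theorem congRepresents_zero_of_sum_nonpos (hb : ∀ c ∈ b, 0 < c) (hB : b.sum ≤ 0) :
    congRepresents a b 0 := by
  obtain rfl : b = [] := by
    by_contra hne
    exact hB.not_gt (List.sum_pos b hb hne)
  exact congRepresents_nil_zero

end congRepresents

theorem reduction_lemma_general (a b : List ℤ)
    (hzero : b.sum ≤ 0 → 0 ≡ b.sum [ZMOD 3] → congRepresents a b 0)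
    (hbase : ∀ n : ℤ, n < b.sum → b.sum ≤ 4 * n → n ≡ b.sum [ZMOD 3] →
      congRepresents a b (4 * n)) :
    mixedUniversal a b ↔
      ∀ N : ℤ, 0 ≤ N → ¬ (4 : ℤ) ∣ (3 * N + b.sum) →
        congRepresents a b (3 * N + b.sum) := by
  refine ⟨fun huniv N hN _ => mixedRepresents_iff_congRepresents.1 (huniv N hN),
    fun hrep N hN => ?_⟩
  have hnot_dvd (m : ℤ) (hm : b.sum ≤ m) (hmod : m ≡ b.sum [ZMOD 3]) (h4 : ¬ 4 ∣ m) :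
      congRepresents a b m := by
    obtain ⟨M, hM⟩ := hmod.symm.dvd
    obtain rfl : m = 3 * M + b.sum := by omega
    exact hrep M (by omega) h4
  have hfour (m : ℤ) (hm : congRepresents a b m) : congRepresents a b (4 * m) :=
    hm.sq_mul (k := 2) (by norm_num)
  exact mixedRepresents_iff_congRepresents.2 <|
    forall_ge_modEq_of_mul_stable (by norm_num) (by decide) hfour hzero hbase hnot_dvd _ (by omega)
      (by simp [Int.ModEq])

theorem reduction_lemma (a b : List ℤ)
    (ha : ∀ c ∈ a, 0 < c) (hb : ∀ c ∈ b, 0 < c)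
    (h : ∀ n : ℤ, 1 ≤ n → n < b.sum → n ≡ b.sum [ZMOD 3] →
      ∀ ν : ℕ, 1 ≤ ν → 4 ^ (ν - 1) * n < b.sum → b.sum ≤ 4 ^ ν * n →
        congRepresents a b (4 ^ ν * n)) :
    mixedUniversal a b ↔
      ∀ N : ℤ, 0 ≤ N → ¬ (4 : ℤ) ∣ (3 * N + b.sum) →
        congRepresents a b (3 * N + b.sum) :=
  reduction_lemma_general a b (fun hB _ => congRepresents_zero_of_sum_nonpos hb hB)
    fun n hlt hle hmod => by simpa using h n (by omega) hlt hmod 1 le_rfl (by simpa) (by simpa)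
end

section
/- For each β ∈ {1, 2} and every nonnegative integer N, the equation x² + y² + β(3z² − 2z) = N has an integer solution (x, y, z) ∈ ℤ³. That is, the ternary mixed sums x²+y²+P₈(z) and x²+y²+2P₈(z) of generalized 4- and 8-gonal numbers are universal. -/
/-!
Since `3 P₈(z) + 1 = (3z - 1)²`, it suffices to represent `3N + 1` by `w² + 3x² + 3y²` and `3N + 2`
by `2v² + 3p² + 3q²`; the second follows from a representation of `6N + 4` by the first form.

For `n ≡ 1 (mod 3)`, Dirichlet's theorem and quadratic reciprocity provide a positive definite
ternary form of determinant `3` that represents `3n`. By Hermite's reduction such a form is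
equivalent to `x² + y² + 3z²` or to `x² + 2(y² ± yz + z²)`, and the latter is excluded because it
represents `6` whereas the constructed form has no value congruent to `6` modulo `9`.
So `3n = X² + Y² + 3Z²`, which forces `3 ∣ X` and `3 ∣ Y`, and dividing by `3` gives the claim.
-/

open Matrix

/-! ### Proper equivalence of quadratic forms -/

/-- Proper equivalence of the quadratic forms with Gram matrices `M` and `N`: a change of variables
of determinant `1` carries `M` to `N`. The form of `M` is `x ↦ x ⬝ᵥ M *ᵥ x`, so the off-diagonal
entries are half the mixed coefficients. -/
def ProperEquiv {ι R : Type*} [Fintype ι] [DecidableEq ι] [CommRing R] (M N : Matrix ι ι R) :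
    Prop :=
  ∃ U : Matrix ι ι R, U.det = 1 ∧ Uᵀ * M * U = N

namespace ProperEquiv

variable {ι R : Type*} [Fintype ι] [DecidableEq ι] [CommRing R] {L M N : Matrix ι ι R}

lemma refl (M : Matrix ι ι R) : ProperEquiv M M := ⟨1, det_one, by simp⟩

lemma symm : ProperEquiv M N → ProperEquiv N M := by
  rintro ⟨U, hdet, rfl⟩
  have hU : U * U⁻¹ = 1 := mul_nonsing_inv U (hdet ▸ isUnit_one)
  refine ⟨U⁻¹, by simp [det_nonsing_inv, hdet], ?_⟩
  calc U⁻¹ᵀ * (Uᵀ * M * U) * U⁻¹ = (U * U⁻¹)ᵀ * M * (U * U⁻¹) := by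
        simp only [transpose_mul, Matrix.mul_assoc]
    _ = M := by rw [hU, transpose_one, Matrix.one_mul, Matrix.mul_one]

lemma trans : ProperEquiv L M → ProperEquiv M N → ProperEquiv L N := by
  rintro ⟨U, hU, rfl⟩ ⟨V, hV, rfl⟩
  exact ⟨U * V, by rw [det_mul, hU, hV, one_mul], by simp only [transpose_mul, Matrix.mul_assoc]⟩

lemma det_eq : ProperEquiv M N → N.det = M.det := by
  rintro ⟨U, hU, rfl⟩
  rw [det_mul, det_mul, det_transpose, hU, one_mul, mul_one]

lemma exists_dotProduct_mulVec_eq :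
    ProperEquiv M N → ∀ x, ∃ y, y ⬝ᵥ M *ᵥ y = x ⬝ᵥ N *ᵥ x := by
  rintro ⟨U, -, rfl⟩ x
  refine ⟨U *ᵥ x, ?_⟩
  rw [← mulVec_mulVec, ← mulVec_mulVec, dotProduct_mulVec x, vecMul_transpose]

lemma posDef [PartialOrder R] [StarRing R] [TrivialStar R] :
    ProperEquiv M N → M.PosDef → N.PosDef := by
  rintro ⟨U, hU, rfl⟩ hM
  rw [← conjTranspose_eq_transpose_of_trivial]
  refine hM.conjTranspose_mul_mul_same (mulVec_injective_of_isUnit ?_)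
  exact (isUnit_iff_isUnit_det U).2 (hU ▸ isUnit_one)

end ProperEquiv

lemma exists_properEquiv_forall_apply_self_le {ι : Type*} [Fintype ι] [DecidableEq ι]
    {M : Matrix ι ι ℤ} (hM : M.PosDef) (i : ι) :
    ∃ N, ProperEquiv M N ∧ ∀ L, ProperEquiv N L → N i i ≤ L i i := by
  obtain ⟨N, hMN, hmin⟩ := exists_minimalFor_of_wellFoundedLT (ProperEquiv M)
    (fun N ↦ (N i i).toNat) ⟨M, .refl M⟩
  refine ⟨N, hMN, fun L hNL ↦ ?_⟩
  have hL : 0 < L i i := ((hMN.trans hNL).posDef hM).diag_pos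
  by_contra! hlt
  have hle : (N i i).toNat ≤ (L i i).toNat := hmin (hMN.trans hNL) (Int.toNat_le_toNat hlt.le)
  omega

section PosDef

variable {ι R : Type*} [CommRing R] [PartialOrder R] [StarRing R] [TrivialStar R]
  {M : Matrix ι ι R}

lemma posDef_iff_isSymm_and_dotProduct_mulVec_pos [Fintype ι] :
    M.PosDef ↔ M.IsSymm ∧ ∀ x ≠ 0, 0 < x ⬝ᵥ M *ᵥ x := by
  simp only [posDef_iff_dotProduct_mulVec, isHermitian_iff_isSymm, star_trivial]

lemma isSymm_of_posDef (hM : M.PosDef) : M.IsSymm := isHermitian_iff_isSymm.1 hM.isHermitian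

end PosDef

/-! ### Reduction of binary forms -/

lemma exists_two_mul_abs_add_mul_le_s4 (b : ℤ) {a : ℤ} (ha : 0 < a) :
    ∃ t, 2 * |b + a * t| ≤ a := by
  refine ⟨-((2 * b + a) / (2 * a)), ?_⟩
  have hdiv := Int.emod_add_mul_ediv (2 * b + a) (2 * a)
  have hnonneg := Int.emod_nonneg (2 * b + a) (b := 2 * a) (by omega)
  have hlt := Int.emod_lt_of_pos (2 * b + a) (b := 2 * a) (by omega)
  cases abs_cases (b + a * -((2 * b + a) / (2 * a))) <;> linarith

theorem exists_properEquiv_two_mul_abs_le {M : Matrix (Fin 2) (Fin 2) ℤ} (hM : M.PosDef) :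
    ∃ N, ProperEquiv M N ∧ 2 * |N 0 1| ≤ N 0 0 ∧ N 0 0 ≤ N 1 1 := by
  obtain ⟨N, hMN, hmin⟩ := exists_properEquiv_forall_apply_self_le hM 0
  have hN00 : 0 < N 0 0 := (hMN.posDef hM).diag_pos
  obtain ⟨t, ht⟩ := exists_two_mul_abs_add_mul_le_s4 (N 0 1) hN00
  let T : Matrix (Fin 2) (Fin 2) ℤ := !![1, t; 0, 1]
  let S : Matrix (Fin 2) (Fin 2) ℤ := !![0, -1; 1, 0]
  have hshift : ProperEquiv N (Tᵀ * N * T) := ⟨T, by simp [T], rfl⟩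
  have hswap : ProperEquiv (Tᵀ * N * T) (Sᵀ * (Tᵀ * N * T) * S) := ⟨S, by simp [S], rfl⟩
  have h00 : (Tᵀ * N * T) 0 0 = N 0 0 := by simp [T, mul_apply]
  have h01 : (Tᵀ * N * T) 0 1 = N 0 1 + N 0 0 * t := by simp [T, mul_apply, add_comm]
  have h11 : (Sᵀ * (Tᵀ * N * T) * S) 0 0 = (Tᵀ * N * T) 1 1 := by simp [S, mul_apply]
  refine ⟨Tᵀ * N * T, hMN.trans hshift, ?_, ?_⟩
  · rwa [h00, h01]
  · rw [h00, ← h11]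
    exact hmin _ (hshift.trans hswap)

lemma three_mul_sq_le_four_mul_det {M : Matrix (Fin 2) (Fin 2) ℤ} (hM : M.IsSymm)
    (hab : 2 * |M 0 1| ≤ M 0 0) (hac : M 0 0 ≤ M 1 1) : 3 * M 0 0 ^ 2 ≤ 4 * M.det := by
  have ha : 0 ≤ M 0 0 := by linarith [abs_nonneg (M 0 1)]
  have hb : (2 * M 0 1) ^ 2 ≤ M 0 0 ^ 2 :=
    sq_le_sq' (by linarith [neg_le_abs (M 0 1)]) (by linarith [le_abs_self (M 0 1)])
  have hc : M 0 0 * M 0 0 ≤ M 0 0 * M 1 1 := mul_le_mul_of_nonneg_left hac ha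
  rw [det_fin_two, hM.apply 0 1]
  linarith

theorem exists_properEquiv_three_mul_sq_le {M : Matrix (Fin 2) (Fin 2) ℤ} (hM : M.PosDef) :
    ∃ N, ProperEquiv M N ∧ 3 * N 0 0 ^ 2 ≤ 4 * M.det := by
  obtain ⟨N, hMN, hab, hac⟩ := exists_properEquiv_two_mul_abs_le hM
  refine ⟨N, hMN, ?_⟩
  rw [← hMN.det_eq]
  exact three_mul_sq_le_four_mul_det (isSymm_of_posDef (hMN.posDef hM)) hab hac

theorem properEquiv_of_det_eq_three {M : Matrix (Fin 2) (Fin 2) ℤ} (hM : M.PosDef)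
    (hdet : M.det = 3) :
    ProperEquiv M !![1, 0; 0, 3] ∨ ∃ b : ℤ, b ^ 2 = 1 ∧ ProperEquiv M !![2, b; b, 2] := by
  obtain ⟨N, hMN, hab, hac⟩ := exists_properEquiv_two_mul_abs_le hM
  have hN := hMN.posDef hM
  have hpos : 0 < N 0 0 := hN.diag_pos
  have hsymm : N 1 0 = N 0 1 := (isSymm_of_posDef hN).apply 0 1
  rw [← hMN.det_eq] at hdet
  have hle : N 0 0 ≤ 2 := by
    nlinarith [three_mul_sq_le_four_mul_det (isSymm_of_posDef hN) hab hac]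
  obtain ⟨hb₁, hb₂⟩ := abs_le.1 (show |N 0 1| ≤ N 0 0 / 2 by omega)
  rw [det_fin_two, hsymm] at hdet
  rw [N.eta_fin_two, hsymm] at hMN
  obtain ha | ha : N 0 0 = 1 ∨ N 0 0 = 2 := by omega
  · have hb : N 0 1 = 0 := by omega
    have hc : N 1 1 = 3 := by simpa [ha, hb] using hdet
    exact .inl (by rwa [ha, hb, hc] at hMN)
  · have hb : N 0 1 = -1 ∨ N 0 1 = 0 ∨ N 0 1 = 1 := by omega
    have hbc : N 0 1 ^ 2 = 1 ∧ N 1 1 = 2 := by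
      rcases hb with hb | hb | hb <;> rw [ha, hb] at hdet <;> simp only [hb] <;> omega
    exact .inr ⟨N 0 1, hbc.1, by rwa [ha, hbc.2] at hMN⟩

/-! ### Reduction of ternary forms -/

section Ternary

variable {R : Type*} [CommRing R]

/-- The block matrix `1 ⊕ V`. It serves both as a form (the orthogonal sum of `x²` and `V`) and as
a change of variables (acting by `V` on the last two variables). -/
def oneSum (V : Matrix (Fin 2) (Fin 2) R) : Matrix (Fin 3) (Fin 3) R :=
  !![1, 0, 0; 0, V 0 0, V 0 1; 0, V 1 0, V 1 1]

lemma det_oneSum (V : Matrix (Fin 2) (Fin 2) R) : (oneSum V).det = V.det := by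
  simp [oneSum, det_fin_three, det_fin_two]

lemma transpose_oneSum (V : Matrix (Fin 2) (Fin 2) R) : (oneSum V)ᵀ = oneSum Vᵀ := by
  ext i j
  fin_cases i <;> fin_cases j <;> rfl

lemma oneSum_mul (V W : Matrix (Fin 2) (Fin 2) R) : oneSum (V * W) = oneSum V * oneSum W := by
  ext i j
  fin_cases i <;> fin_cases j <;> simp [oneSum, mul_apply, Fin.sum_univ_three]

lemma ProperEquiv.map_oneSum {S T : Matrix (Fin 2) (Fin 2) R} :
    ProperEquiv S T → ProperEquiv (oneSum S) (oneSum T) := by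
  rintro ⟨V, hV, rfl⟩
  exact ⟨oneSum V, by rw [det_oneSum, hV], by rw [oneSum_mul, oneSum_mul, transpose_oneSum]⟩

/-- The Schur complement of the entry `M 0 0`, multiplied by `M 0 0` so that no division occurs.
It is the Gram matrix of what remains of `M 0 0` times the form of `M` after completing the square
in the first variable. -/
def scaledSchur (M : Matrix (Fin 3) (Fin 3) R) : Matrix (Fin 2) (Fin 2) R :=
  of fun i j ↦ M 0 0 * M i.succ j.succ - M i.succ 0 * M 0 j.succ

variable {M : Matrix (Fin 3) (Fin 3) R}

lemma det_scaledSchur : (scaledSchur M).det = M 0 0 * M.det := by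
  simp only [scaledSchur, det_fin_two, det_fin_three, of_apply, Fin.succ_zero_eq_one,
    Fin.succ_one_eq_two]
  ring

lemma det_submatrix_castSucc :
    (M.submatrix Fin.castSucc Fin.castSucc).det = scaledSchur M 0 0 := by
  simp [scaledSchur, det_fin_two, mul_comm (M 0 1)]

lemma isSymm_scaledSchur (hM : M.IsSymm) : (scaledSchur M).IsSymm :=
  IsSymm.ext fun i j ↦ by
    simp only [scaledSchur, of_apply, hM.apply]
    ring

lemma apply_mul_dotProduct_mulVec (hM : M.IsSymm) (x : Fin 3 → R) :
    M 0 0 * (x ⬝ᵥ M *ᵥ x) = (M 0 ⬝ᵥ x) ^ 2 + Fin.tail x ⬝ᵥ scaledSchur M *ᵥ Fin.tail x := by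
  simp only [scaledSchur, mulVec, dotProduct, Fin.sum_univ_three, Fin.sum_univ_two, of_apply,
    Fin.tail, Fin.succ_zero_eq_one, Fin.succ_one_eq_two, hM.apply 0 1, hM.apply 0 2]
  ring

lemma properEquiv_oneSum_scaledSchur (hM : M.IsSymm) (h00 : M 0 0 = 1) :
    ProperEquiv M (oneSum (scaledSchur M)) := by
  refine ⟨!![1, -M 0 1, -M 0 2; 0, 1, 0; 0, 0, 1], by simp [det_fin_three], ?_⟩
  ext i j
  fin_cases i <;> fin_cases j <;>
    simp only [Fin.zero_eta, Fin.mk_one, Fin.reduceFinMk, oneSum, scaledSchur, mul_apply,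
      transpose_apply, of_apply, Fin.sum_univ_three, Fin.succ_zero_eq_one, Fin.succ_one_eq_two,
      cons_val', cons_val_zero, cons_val_one, cons_val, cons_val_fin_one, h00, hM.apply 0 1,
      hM.apply 0 2] <;>
    ring

lemma exists_properEquiv_scaledSchur_eq {S : Matrix (Fin 2) (Fin 2) R}
    (h : ProperEquiv (scaledSchur M) S) :
    ∃ N, ProperEquiv M N ∧ N 0 0 = M 0 0 ∧ scaledSchur N = S := by
  obtain ⟨V, hV, rfl⟩ := h
  refine ⟨_, ⟨oneSum V, by rw [det_oneSum, hV], rfl⟩, ?_, ?_⟩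
  · simp [oneSum, mul_apply, Fin.sum_univ_three]
  · ext i j
    fin_cases i <;> fin_cases j <;>
      simp only [Fin.zero_eta, Fin.mk_one, oneSum, scaledSchur, mul_apply, transpose_apply,
        of_apply, Fin.sum_univ_three, Fin.sum_univ_two, Fin.succ_zero_eq_one, Fin.succ_one_eq_two,
        cons_val', cons_val_zero, cons_val_one, cons_val, cons_val_fin_one] <;>
      ring

lemma exists_properEquiv_submatrix_castSucc_eq {S : Matrix (Fin 2) (Fin 2) R}
    (h : ProperEquiv (M.submatrix Fin.castSucc Fin.castSucc) S) :
    ∃ N, ProperEquiv M N ∧ N.submatrix Fin.castSucc Fin.castSucc = S := by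
  obtain ⟨W, hW, rfl⟩ := h
  refine ⟨_, ⟨!![W 0 0, W 0 1, 0; W 1 0, W 1 1, 0; 0, 0, 1], ?_, rfl⟩, ?_⟩
  · simpa [det_fin_three, det_fin_two] using hW
  · ext i j
    fin_cases i <;> fin_cases j <;> simp [mul_apply, Fin.sum_univ_three]

end Ternary

section PosDef

variable {R : Type*} [CommRing R] [LinearOrder R] [IsStrictOrderedRing R] [StarRing R]
  [TrivialStar R]

lemma posDef_of_apply_pos_of_det_pos {M : Matrix (Fin 2) (Fin 2) R} (hM : M.IsSymm)
    (h00 : 0 < M 0 0) (hdet : 0 < M.det) : M.PosDef := by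
  refine posDef_iff_isSymm_and_dotProduct_mulVec_pos.2 ⟨hM, fun x hx ↦ ?_⟩
  have hvalue : M 0 0 * (x ⬝ᵥ M *ᵥ x) = (M 0 0 * x 0 + M 0 1 * x 1) ^ 2 + M.det * x 1 ^ 2 := by
    simp only [mulVec, dotProduct, Fin.sum_univ_two, det_fin_two, hM.apply 0 1]
    ring
  rw [← mul_pos_iff_of_pos_left h00, hvalue]
  by_cases h1 : x 1 = 0
  · have h0 : x 0 ≠ 0 := fun h0 ↦ hx <| by ext i; fin_cases i <;> assumption
    rw [h1, mul_zero, add_zero, zero_pow two_ne_zero, mul_zero, add_zero]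
    positivity
  · positivity

variable {M : Matrix (Fin 3) (Fin 3) R}

lemma posDef_of_posDef_scaledSchur (hM : M.IsSymm) (h00 : 0 < M 0 0)
    (hS : (scaledSchur M).PosDef) : M.PosDef := by
  refine posDef_iff_isSymm_and_dotProduct_mulVec_pos.2 ⟨hM, fun x hx ↦ ?_⟩
  rw [← mul_pos_iff_of_pos_left h00, apply_mul_dotProduct_mulVec hM]
  by_cases htail : Fin.tail x = 0
  · have hx0 : x 0 ≠ 0 := fun h ↦ hx <| by
      rw [← Fin.cons_self_tail x, h, htail]
      exact cons_zero_zero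
    have hdot : M 0 ⬝ᵥ x = M 0 0 * x 0 := by
      rw [← Fin.cons_self_tail x, htail]
      simp [dotProduct, Fin.sum_univ_succ]
    rw [hdot, htail, zero_dotProduct, add_zero]
    positivity
  · have := (posDef_iff_isSymm_and_dotProduct_mulVec_pos.1 hS).2 _ htail
    positivity

lemma posDef_scaledSchur (hM : M.PosDef) : (scaledSchur M).PosDef := by
  obtain ⟨hsymm, hpos⟩ := posDef_iff_isSymm_and_dotProduct_mulVec_pos.1 hM
  have h00 : 0 < M 0 0 := hM.diag_pos
  refine posDef_iff_isSymm_and_dotProduct_mulVec_pos.2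
    ⟨isSymm_scaledSchur hsymm, fun y hy ↦ ?_⟩
  -- The first coordinate is chosen so that the completed square vanishes at `x`.
  let x : Fin 3 → R := vecCons (-(M 0 1 * y 0 + M 0 2 * y 1)) (M 0 0 • y)
  have htail : Fin.tail x = M 0 0 • y := Fin.tail_cons _ _
  have hx : x ≠ 0 := fun h ↦ smul_ne_zero h00.ne' hy (by rw [← htail, h]; rfl)
  have hdot : M 0 ⬝ᵥ x = 0 := calc
    M 0 ⬝ᵥ x = M 0 0 * -(M 0 1 * y 0 + M 0 2 * y 1) + M 0 1 * (M 0 0 * y 0)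
        + M 0 2 * (M 0 0 * y 1) := Fin.sum_univ_three _
    _ = 0 := by ring
  have hvalue : M 0 0 * (x ⬝ᵥ M *ᵥ x) = M 0 0 * (M 0 0 * (y ⬝ᵥ scaledSchur M *ᵥ y)) := by
    rw [apply_mul_dotProduct_mulVec hsymm, hdot, htail, mulVec_smul, smul_dotProduct,
      dotProduct_smul, zero_pow two_ne_zero, zero_add, smul_eq_mul, smul_eq_mul]
  have hxpos := hpos x hx
  rw [mul_left_cancel₀ h00.ne' hvalue] at hxpos
  exact (mul_pos_iff_of_pos_left h00).1 hxpos

end PosDef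

/- Hermite's bound. Minimality of `K 0 0` bounds it in terms of any leading `2 × 2` minor, and that
minor is the leading entry of the scaled Schur complement, which can be reduced independently. -/
theorem exists_properEquiv_mul_pow_three_le {M : Matrix (Fin 3) (Fin 3) ℤ} (hM : M.PosDef) :
    ∃ N, ProperEquiv M N ∧ 27 * N 0 0 ^ 3 ≤ 64 * M.det := by
  obtain ⟨K, hMK, hmin⟩ := exists_properEquiv_forall_apply_self_le hM 0
  have hK := hMK.posDef hM
  have hpos : 0 < K 0 0 := hK.diag_pos
  obtain ⟨S, hS, hminor_le⟩ := exists_properEquiv_three_mul_sq_le (posDef_scaledSchur hK)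
  obtain ⟨N, hKN, -, rfl⟩ := exists_properEquiv_scaledSchur_eq hS
  have hN := hKN.posDef hK
  obtain ⟨B, hB, hle_minor⟩ :=
    exists_properEquiv_three_mul_sq_le (hN.submatrix (Fin.castSucc_injective 2))
  obtain ⟨L, hNL, rfl⟩ := exists_properEquiv_submatrix_castSucc_eq hB
  have hle : K 0 0 ≤ L 0 0 := hmin L (hKN.trans hNL)
  rw [det_scaledSchur, hMK.det_eq] at hminor_le
  rw [det_submatrix_castSucc] at hle_minor
  have hlower : 3 * K 0 0 ^ 2 ≤ 4 * scaledSchur N 0 0 :=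
    (mul_le_mul_of_nonneg_left (pow_le_pow_left₀ hpos.le hle 2) (by norm_num)).trans hle_minor
  refine ⟨K, hMK, le_of_mul_le_mul_left ?_ hpos⟩
  calc K 0 0 * (27 * K 0 0 ^ 3) = 3 * (3 * K 0 0 ^ 2) ^ 2 := by ring
    _ ≤ 3 * (4 * scaledSchur N 0 0) ^ 2 := by gcongr
    _ = 16 * (3 * scaledSchur N 0 0 ^ 2) := by ring
    _ ≤ 16 * (4 * (K 0 0 * M.det)) := by gcongr
    _ = K 0 0 * (64 * M.det) := by ring

theorem properEquiv_oneSum_of_det_eq_three {M : Matrix (Fin 3) (Fin 3) ℤ} (hM : M.PosDef)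
    (hdet : M.det = 3) :
    ProperEquiv M (oneSum !![1, 0; 0, 3]) ∨
      ∃ b : ℤ, b ^ 2 = 1 ∧ ProperEquiv M (oneSum !![2, b; b, 2]) := by
  obtain ⟨N, hMN, hle⟩ := exists_properEquiv_mul_pow_three_le hM
  have hN := hMN.posDef hM
  have hpos : 0 < N 0 0 := hN.diag_pos
  have h00 : N 0 0 = 1 := by
    by_contra hne
    have := pow_le_pow_left₀ (by norm_num) (show 2 ≤ N 0 0 by omega) 3
    omega
  have hMS := hMN.trans (properEquiv_oneSum_scaledSchur (isSymm_of_posDef hN) h00)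
  have hSdet : (scaledSchur N).det = 3 := by rw [det_scaledSchur, h00, hMN.det_eq, hdet, one_mul]
  obtain h | ⟨b, hb, h⟩ := properEquiv_of_det_eq_three (posDef_scaledSchur hN) hSdet
  · exact .inl (hMS.trans h.map_oneSum)
  · exact .inr ⟨b, hb, hMS.trans h.map_oneSum⟩

theorem properEquiv_oneSum_of_forall_not_modEq_six {M : Matrix (Fin 3) (Fin 3) ℤ}
    (hM : M.PosDef) (hdet : M.det = 3) (hsix : ∀ x, ¬ x ⬝ᵥ M *ᵥ x ≡ 6 [ZMOD 9]) :
    ProperEquiv M (oneSum !![1, 0; 0, 3]) := by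
  refine (properEquiv_oneSum_of_det_eq_three hM hdet).resolve_right ?_
  rintro ⟨b, hb, hMb⟩
  have hvalue : ![0, 1, b] ⬝ᵥ oneSum !![2, b; b, 2] *ᵥ ![0, 1, b] = 4 * b ^ 2 + 2 := by
    simp only [oneSum, mulVec, dotProduct, Fin.sum_univ_three, of_apply, cons_val', cons_val_zero,
      cons_val_one, cons_val, cons_val_fin_one]
    ring
  obtain ⟨x, hx⟩ := hMb.exists_dotProduct_mulVec_eq ![0, 1, b]
  exact hsix x (by rw [hx, hvalue, hb]; rfl)

/-! ### A form of determinant three representing a multiple of three -/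

lemma exists_prime_dvd_mul_add_one {a q : ℕ} (hq : q ≠ 0) (h : a.Coprime q) :
    ∃ p : ℕ, p.Prime ∧ q ∣ a * p + 1 := by
  have : NeZero q := ⟨hq⟩
  obtain ⟨p, -, hp, hmod⟩ :=
    Nat.forall_exists_prime_gt_and_eq_mod (-(ZMod.unitOfCoprime a h)⁻¹).isUnit 0
  refine ⟨p, hp, (ZMod.natCast_eq_zero_iff _ _).1 ?_⟩
  push_cast
  rw [hmod, ← ZMod.coe_unitOfCoprime a h, Units.val_neg, mul_neg, Units.mul_inv, neg_add_cancel]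

lemma jacobiSym_eq_one_of_four_mul_dvd_add_one {n m : ℕ} (h : 4 * n ∣ m + 1) :
    jacobiSym n m = 1 := by
  have hn : 0 < n := Nat.pos_of_ne_zero (by rintro rfl; simp at h)
  have hodd : Odd m := by
    have : 4 ∣ m + 1 := (dvd_mul_right 4 n).trans h
    grind
  have hmod : m % (4 * n) = 4 * n - 1 := by
    obtain ⟨t, ht⟩ := h
    obtain ⟨s, rfl⟩ : ∃ s, t = s + 1 := Nat.exists_eq_succ_of_ne_zero (by rintro rfl; omega)
    rw [show m = (4 * n - 1) + 4 * n * s by rw [mul_add] at ht; omega, Nat.add_mul_mod_self_left,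
      Nat.mod_eq_of_lt (by omega)]
  have hone : (4 * n : ℤ) ≡ 1 [ZMOD (4 * n - 1 : ℕ)] := by
    refine (Int.modEq_iff_dvd.2 ⟨1, ?_⟩).symm
    push_cast [show 1 ≤ 4 * n by omega]
    ring
  have hfour : jacobiSym 4 (4 * n - 1) = 1 := jacobiSym.at_four (by rw [Nat.odd_iff]; omega)
  calc jacobiSym n m = jacobiSym n (4 * n - 1) := by rw [jacobiSym.mod_right' n hodd, hmod]
    _ = jacobiSym (4 * n) (4 * n - 1) := by rw [jacobiSym.mul_left, hfour, one_mul]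
    _ = jacobiSym 1 (4 * n - 1) := jacobiSym.mod_left' hone
    _ = 1 := jacobiSym.one_left _

lemma exists_prime_dvd_sq_add {n : ℕ} (hn : n % 3 = 1) :
    ∃ k : ℕ, k.Prime ∧ 4 * n ∣ 3 * k + 1 ∧ ∃ s : ℤ, (k : ℤ) ∣ s ^ 2 + n := by
  obtain ⟨k, hk, hdvd⟩ := exists_prime_dvd_mul_add_one (a := 3) (q := 4 * n) (by omega)
    ((Nat.Prime.coprime_iff_not_dvd Nat.prime_three).2 (by omega))
  have hk4 : k % 4 = 1 := by
    have : 4 ∣ 3 * k + 1 := (dvd_mul_right 4 n).trans hdvd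
    omega
  have : Fact k.Prime := ⟨hk⟩
  have : NeZero k := ⟨hk.ne_zero⟩
  have hJ3 : jacobiSym n 3 = 1 := by
    rw [jacobiSym.mod_left, show (n : ℤ) % (3 : ℕ) = 1 by omega, jacobiSym.one_left]
  have hJ : jacobiSym (-n) k = 1 := calc
    jacobiSym (-n) k = jacobiSym n k := by
      rw [jacobiSym.neg _ (by rw [Nat.odd_iff]; omega), ZMod.χ₄_nat_one_mod_four hk4, one_mul]
    _ = jacobiSym n (3 * k) := by rw [jacobiSym.mul_right, hJ3, one_mul]
    _ = 1 := jacobiSym_eq_one_of_four_mul_dvd_add_one hdvd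
  obtain ⟨r, hr⟩ := ZMod.isSquare_of_jacobiSym_eq_one hJ
  obtain ⟨s, rfl⟩ := ZMod.intCast_surjective r
  refine ⟨k, hk, hdvd, s, (ZMod.intCast_zmod_eq_zero_iff_dvd _ _).1 ?_⟩
  push_cast at hr ⊢
  linear_combination -hr

lemma exists_mul_sub_sq_eq_four_mul {n : ℕ} (hn : n % 3 = 1) :
    ∃ a k e t : ℤ, 0 < a ∧ 0 < t ∧ a * k - e ^ 2 = 4 * t ∧ 3 * k + 1 = 4 * n * t := by
  obtain ⟨k, hk, ⟨t, ht⟩, s, m, hm⟩ := exists_prime_dvd_sq_add hn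
  have hkpos : (0 : ℤ) < k := mod_cast hk.pos
  have htpos : 0 < t := Nat.pos_of_ne_zero (by rintro rfl; omega)
  have hkt : (3 * k + 1 : ℤ) = 4 * n * t := mod_cast ht
  -- `4t` inverts `n` modulo `k`, so `s² ≡ -n` gives `(4ts)² ≡ -4t`.
  have hdet : (16 * t ^ 2 * m - 12 * t) * k - (4 * t * s) ^ 2 = (4 * t : ℤ) := by
    linear_combination (-16 * t ^ 2 : ℤ) * hm - (4 * t : ℤ) * hkt
  refine ⟨16 * t ^ 2 * m - 12 * t, k, 4 * t * s, t, ?_, mod_cast htpos, hdet, hkt⟩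
  refine pos_of_mul_pos_left (b := (k : ℤ)) ?_ hkpos.le
  rw [sub_eq_iff_eq_add.1 hdet]
  positivity

lemma three_dvd_and_three_dvd_of_dvd_binary {a b c x y : ℤ} (hdet : a * c - b ^ 2 ≡ 1 [ZMOD 3])
    (h : 3 ∣ a * x ^ 2 + 2 * b * x * y + c * y ^ 2) : 3 ∣ x ∧ 3 ∣ y := by
  have anisotropic : ∀ a b c x y : ZMod 3, a * c - b ^ 2 = 1 →
      a * x ^ 2 + 2 * b * x * y + c * y ^ 2 = 0 → x = 0 ∧ y = 0 := by decide
  have hdvd (z : ℤ) : 3 ∣ z ↔ (z : ZMod 3) = 0 := (ZMod.intCast_zmod_eq_zero_iff_dvd z 3).symm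
  have hdet' := (ZMod.intCast_eq_intCast_iff _ _ 3).2 hdet
  rw [hdvd] at h
  push_cast at h hdet'
  rw [hdvd, hdvd]
  exact anisotropic a b c x y hdet' h

/-- The ternary form `a x² + 2 e x y + k y² + 6 x z + 3 n z²`. It takes the value `3 n` at
`(0, 0, 1)`, and its other coefficients are free for arranging determinant `3`. -/
def borderedForm (a e k n : ℤ) : Matrix (Fin 3) (Fin 3) ℤ :=
  !![a, e, 3; e, k, 0; 3, 0, 3 * n]

section BorderedForm

variable {a e k n t : ℤ}

lemma isSymm_borderedForm : (borderedForm a e k n).IsSymm :=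
  IsSymm.ext fun i j ↦ by fin_cases i <;> fin_cases j <;> rfl

lemma det_borderedForm (hdet : a * k - e ^ 2 = 4 * t) (hk : 3 * k + 1 = 4 * n * t) :
    (borderedForm a e k n).det = 3 := by
  simp only [borderedForm, det_fin_three, of_apply, cons_val', cons_val_zero, cons_val_one,
    cons_val, cons_val_fin_one]
  linear_combination 3 * n * hdet - 3 * hk

lemma posDef_borderedForm (ha : 0 < a) (ht : 0 < t) (hdet : a * k - e ^ 2 = 4 * t)
    (hk : 3 * k + 1 = 4 * n * t) : (borderedForm a e k n).PosDef := by
  refine posDef_of_posDef_scaledSchur isSymm_borderedForm ha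
    (posDef_of_apply_pos_of_det_pos (isSymm_scaledSchur isSymm_borderedForm) ?_ ?_)
  · have hminor : scaledSchur (borderedForm a e k n) 0 0 = a * k - e * e := rfl
    linarith
  · rw [det_scaledSchur, det_borderedForm hdet hk]
    exact mul_pos ha three_pos

lemma dotProduct_borderedForm_mulVec (x : Fin 3 → ℤ) :
    x ⬝ᵥ borderedForm a e k n *ᵥ x =
      a * x 0 ^ 2 + 2 * e * x 0 * x 1 + k * x 1 ^ 2 + 3 * (2 * x 0 * x 2 + n * x 2 ^ 2) := by
  simp only [borderedForm, mulVec, dotProduct, Fin.sum_univ_three, of_apply, cons_val',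
    cons_val_zero, cons_val_one, cons_val, cons_val_fin_one]
  ring

lemma not_dotProduct_borderedForm_mulVec_modEq_six (hdet : a * k - e ^ 2 ≡ 1 [ZMOD 3])
    (hn : n ≡ 1 [ZMOD 3]) (x : Fin 3 → ℤ) :
    ¬ x ⬝ᵥ borderedForm a e k n *ᵥ x ≡ 6 [ZMOD 9] := by
  intro hsix
  rw [dotProduct_borderedForm_mulVec, Int.ModEq] at hsix
  obtain ⟨⟨u, hu⟩, v, hv⟩ :=
    three_dvd_and_three_dvd_of_dvd_binary (x := x 0) (y := x 1) hdet (by omega)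
  obtain ⟨m, hm⟩ := hn.symm.dvd
  have hvalue : a * x 0 ^ 2 + 2 * e * x 0 * x 1 + k * x 1 ^ 2 + 3 * (2 * x 0 * x 2 + n * x 2 ^ 2) =
      3 * x 2 ^ 2 + 9 * (a * u ^ 2 + 2 * e * u * v + k * v ^ 2 + 2 * u * x 2 + m * x 2 ^ 2) := by
    rw [hu, hv]
    linear_combination 3 * x 2 ^ 2 * hm
  have hsq : x 2 ^ 2 % 3 = 0 ∨ x 2 ^ 2 % 3 = 1 := by
    have hx : x 2 % 3 = 0 ∨ x 2 % 3 = 1 ∨ x 2 % 3 = 2 := by omega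
    rcases hx with hx | hx | hx <;> simp [pow_two, Int.mul_emod, hx]
  omega

end BorderedForm

/-! ### The forms `w² + 3x² + 3y²` and `2v² + 3p² + 3q²` -/

theorem exists_sq_add_three_mul_sq_add_three_mul_sq_eq {n : ℤ} (hn₀ : 0 ≤ n)
    (hn : n ≡ 1 [ZMOD 3]) : ∃ w x y, w ^ 2 + 3 * x ^ 2 + 3 * y ^ 2 = n := by
  lift n to ℕ using hn₀
  obtain ⟨a, k, e, t, ha, ht, hdet, hk⟩ := exists_mul_sub_sq_eq_four_mul (n := n)
    (by rw [Int.ModEq] at hn; omega)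
  have hdet3 : a * k - e ^ 2 ≡ 1 [ZMOD 3] := calc
    a * k - e ^ 2 = 4 * 1 * t := by rw [hdet, mul_one]
    _ ≡ 4 * n * t [ZMOD 3] := by gcongr
    _ = 3 * k + 1 := hk.symm
    _ ≡ 1 [ZMOD 3] := by simp [Int.ModEq]
  have hequiv : ProperEquiv (borderedForm a e k n) (oneSum !![1, 0; 0, 3]) :=
    properEquiv_oneSum_of_forall_not_modEq_six (posDef_borderedForm ha ht hdet hk)
      (det_borderedForm hdet hk) (not_dotProduct_borderedForm_mulVec_modEq_six hdet3 hn)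
  obtain ⟨x, hx⟩ := hequiv.symm.exists_dotProduct_mulVec_eq ![0, 0, 1]
  have hsum : x 0 ^ 2 + x 1 ^ 2 + 3 * x 2 ^ 2 = 3 * n := by
    rw [dotProduct_borderedForm_mulVec] at hx
    simp only [oneSum, mulVec, dotProduct, Fin.sum_univ_three, of_apply, cons_val', cons_val_zero,
      cons_val_one, cons_val, cons_val_fin_one] at hx
    linear_combination hx
  obtain ⟨⟨u, hu⟩, v, hv⟩ := three_dvd_and_three_dvd_of_dvd_binary (a := 1) (b := 0) (c := 1)
    (x := x 0) (y := x 1) rfl (by omega)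
  rw [hu, hv] at hsum
  exact ⟨x 2, u, v, by linarith⟩

lemma exists_two_mul_sq_add_of_odd_of_odd_of_even {w x y m : ℤ} (hw : Odd w) (hx : Odd x)
    (hy : Even y) (h : w ^ 2 + 3 * x ^ 2 + 3 * y ^ 2 = 2 * m) :
    ∃ v p q, 2 * v ^ 2 + 3 * p ^ 2 + 3 * q ^ 2 = m := by
  obtain ⟨y, rfl⟩ := hy
  wlog hd : 4 ∣ w - x generalizing x
  · rw [Int.odd_iff] at hw hx
    exact this (x := -x) (by rw [Int.odd_iff]; omega) (by rwa [neg_sq]) (by omega)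
  obtain ⟨j, hj⟩ := hd
  rw [sub_eq_iff_eq_add.1 hj] at h
  exact ⟨x + j, j + y, j - y, by linarith⟩

theorem exists_two_mul_sq_add_three_mul_sq_add_three_mul_sq_eq {m : ℤ} (hm₀ : 0 ≤ m)
    (hm : m ≡ 2 [ZMOD 3]) : ∃ v p q, 2 * v ^ 2 + 3 * p ^ 2 + 3 * q ^ 2 = m := by
  obtain ⟨w, x, y, h⟩ := exists_sq_add_three_mul_sq_add_three_mul_sq_eq (n := 2 * m) (by omega)
    (hm.mul_left 2)
  have hparity : (Even w ↔ Even x) ↔ Even y := by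
    have heven : Even (w ^ 2 + 3 * x ^ 2 + 3 * y ^ 2) := h ▸ even_two_mul m
    simpa [Int.even_add, Int.even_mul, Int.even_pow, show ¬ Even (3 : ℤ) by decide] using heven
  by_cases hw : Even w
  · have hxy : Even (x - y) := Int.even_sub.2 (by tauto)
    obtain ⟨v, rfl⟩ := hw
    obtain ⟨p, hp⟩ := hxy
    rw [sub_eq_iff_eq_add.1 hp] at h
    exact ⟨v, y + p, p, by linarith⟩
  · have hw' : Odd w := Int.not_even_iff_odd.1 hw
    by_cases hx : Even x
    · have hy : Odd y := Int.not_even_iff_odd.1 (by tauto)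
      exact exists_two_mul_sq_add_of_odd_of_odd_of_even hw' hy hx (by linarith)
    · have hy : Even y := by tauto
      exact exists_two_mul_sq_add_of_odd_of_odd_of_even hw' (Int.not_even_iff_odd.1 hx) hy h

lemma exists_three_mul_sub_one_sq_eq {w : ℤ} (hw : ¬ 3 ∣ w) : ∃ z, (3 * z - 1) ^ 2 = w ^ 2 := by
  simp only [sq_eq_sq_iff_eq_or_eq_neg]
  obtain h | h : w % 3 = 1 ∨ w % 3 = 2 := by omega
  · exact ⟨(1 - w) / 3, by omega⟩
  · exact ⟨(w + 1) / 3, by omega⟩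

lemma exists_sq_add_sq_add_mul_octagonal_eq {β N : ℤ} (hβ : ¬ 3 ∣ β)
    (h : ∃ w x y, β * w ^ 2 + 3 * x ^ 2 + 3 * y ^ 2 = 3 * N + β) :
    ∃ x y z, x ^ 2 + y ^ 2 + β * (3 * z ^ 2 - 2 * z) = N := by
  obtain ⟨w, x, y, h⟩ := h
  have hw : ¬ 3 ∣ w := by
    rintro ⟨j, rfl⟩
    exact hβ ⟨3 * β * j ^ 2 + x ^ 2 + y ^ 2 - N, by linear_combination -h⟩
  obtain ⟨z, hz⟩ := exists_three_mul_sub_one_sq_eq hw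
  rw [← hz] at h
  exact ⟨x, y, z, by linarith⟩

theorem universal_x2_y2_betaP8 :
    ∀ β ∈ ({1, 2} : Set ℤ), ∀ N : ℤ, 0 ≤ N →
      ∃ x y z : ℤ, x ^ 2 + y ^ 2 + β * (3 * z ^ 2 - 2 * z) = N := by
  rintro β (rfl | rfl) N hN
  · apply exists_sq_add_sq_add_mul_octagonal_eq (by norm_num)
    simpa only [one_mul] using exists_sq_add_three_mul_sq_add_three_mul_sq_eq
      (n := 3 * N + 1) (by omega) (by simp [Int.ModEq])
  · apply exists_sq_add_sq_add_mul_octagonal_eq (by norm_num)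
    exact exists_two_mul_sq_add_three_mul_sq_add_three_mul_sq_eq (by omega) (by simp [Int.ModEq])
end
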